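/- Let f ∈ L^1(-1,1) and g ∈ LlogL(-1,1) be such that f·T(gχ_A) ∈ L^1(-1,1) for every Borel set A ⊆ (-1,1). Then g·T(f) ∈ L^1(-1,1) and the Parseval formula ∫_{-1}^1 f T(g) = −∫_{-1}^1 g T(f) holds. -/

import Mathlib

open MeasureTheory Set Filter

noncomputable section

/-- Lebesgue measure restricted to the interval `(-1, 1)`. -/
def μI : Measure ℝ := volume.restrict (Set.Ioo (-1 : ℝ) 1)

/-- The finite Hilbert transform: the principal-value limit
`T(f)(t) = lim_{ε→0⁺} (1/π) ∫_{x∈(-1,1), |x-t|≥ε} f(x)/(x-t) dx`. -/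
def FHT (f : ℝ → ℂ) (t : ℝ) : ℂ :=
  limUnder (nhdsWithin (0 : ℝ) (Set.Ioi 0)) fun ε : ℝ =>
    (Real.pi : ℂ)⁻¹ *
      ∫ x in {x : ℝ | x ∈ Set.Ioo (-1 : ℝ) 1 ∧ ε ≤ |x - t|}, f x / ((x : ℂ) - (t : ℂ))

/-- The operator `T̂(g)(x) = -(1-x²)^{-1/2} T(t ↦ √(1-t²) g(t))(x)`. -/
def hatT (g : ℝ → ℂ) (x : ℝ) : ℂ :=
  -((Real.sqrt (1 - x ^ 2) : ℂ))⁻¹ * FHT (fun t => (Real.sqrt (1 - t ^ 2) : ℂ) * g t) x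

/-- Membership in the Zygmund space `L log L(-1,1)`:
`f` is a.e. measurable on `(-1,1)` and `∫ |f| log⁺|f| < ∞`. -/
def MemLlogL (f : ℝ → ℂ) : Prop :=
  AEStronglyMeasurable f μI ∧
    IntegrableOn (fun x => ‖f x‖ * max (Real.log ‖f x‖) 0) (Set.Ioo (-1 : ℝ) 1)

/-- The distribution function `λ ↦ |{x ∈ (-1,1) : |f(x)| > λ}|`. -/
def distFun (f : ℝ → ℂ) (lam : ℝ) : ℝ :=
  (volume {x : ℝ | x ∈ Set.Ioo (-1 : ℝ) 1 ∧ lam < ‖f x‖}).toReal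

/-- The decreasing rearrangement `f*` of `f`, a function on `(0,2)`. -/
def decRearr (f : ℝ → ℂ) (t : ℝ) : ℝ :=
  sInf {lam : ℝ | 0 ≤ lam ∧ distFun f lam ≤ t}

/-- The `L log L` norm `‖f‖ = ∫_0^2 f*(t) log(2e/t) dt`. -/
def llogLNorm (f : ℝ → ℂ) : ℝ :=
  ∫ t in Set.Ioo (0 : ℝ) 2, decRearr f t * Real.log (2 * Real.exp 1 / t)

/-- The `L(log L)^α` norm `∫_0^2 f*(t) log^α(2e/t) dt` (for `α = 0` this is the `L¹` norm). -/
def zygNorm (α : ℝ) (f : ℝ → ℂ) : ℝ :=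
  ∫ t in Set.Ioo (0 : ℝ) 2, decRearr f t * Real.log (2 * Real.exp 1 / t) ^ α

/-- Membership in the Zygmund space `L(log L)^α(-1,1)`. -/
def MemZyg (α : ℝ) (f : ℝ → ℂ) : Prop :=
  AEStronglyMeasurable f μI ∧
    IntegrableOn (fun t => decRearr f t * Real.log (2 * Real.exp 1 / t) ^ α)
      (Set.Ioo (0 : ℝ) 2)

/-- Membership in `L(log L)²(-1,1)`: `∫ |f| (log(2+|f|))² < ∞`. -/
def MemLlogL2 (f : ℝ → ℂ) : Prop :=
  AEStronglyMeasurable f μI ∧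
    IntegrableOn (fun x => ‖f x‖ * Real.log (2 + ‖f x‖) ^ 2) (Set.Ioo (-1 : ℝ) 1)

/-- The constant `c(β,γ) = max{1/(1-β), 1/(1-γ), 1/(β+γ-1)}`. -/
def cBG (β γ : ℝ) : ℝ := max (max (1 / (1 - β)) (1 / (1 - γ))) (1 / (β + γ - 1))

/-!
The kernel `1/(x - z)` at `z = t + iε` is `i` times the Poisson kernel plus the conjugate Poisson
kernel, and the finite Hilbert transform of an integrable function is almost everywhere the limit
of its conjugate Poisson integrals as `ε → 0`: boundary values exist by Fatou's theorem for bounded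
holomorphic functions on the upper half-plane, applied to `1/(1 - iF)` with `F` the Cauchy
transform of a nonnegative density. For fixed `ε` the conjugate Poisson kernel is bounded and odd,
so the Parseval formula is Fubini's theorem. For two bounded functions the conjugate Poisson
integrals are exponentially integrable uniformly in `ε`, and Vitali's theorem lets `ε → 0`.

The general case follows by truncating one function at a time. If `f N` are the truncations of `f`,
then over every set `A` the integral of `g · T(f N)` is minus that of `f N · T(g χ_A)`, which
converges by dominated convergence. Hence the functions `g · T(f N)` are uniformly integrable by the
Vitali–Hahn–Saks theorem, and along a subsequence they converge almost everywhere to `g · T(f)` by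
the estimate `∫ log (1 + |π T(u)|²) ≤ 4π ∫ u` for `u ≥ 0`. This applies first with `f ∈ L log L` and
`g` bounded, and then with `f ∈ L¹` and `g ∈ L log L`.
-/

open scoped Topology ENNReal NNReal symmDiff

/-- For `k = 0, 1, 2, 3`, the positive part of `z` in the direction `i ^ k`. A complex function is
the combination `∑ i ^ k` of its four directional parts, which are nonnegative. -/
def directionalPart (k : ℕ) (z : ℂ) : ℝ := max (((-Complex.I) ^ k * z).re) 0

lemma directionalPart_nonneg (k : ℕ) (z : ℂ) : 0 ≤ directionalPart k z := le_max_right _ _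

lemma continuous_directionalPart (k : ℕ) : Continuous (directionalPart k) := by
  unfold directionalPart
  fun_prop

lemma directionalPart_le_norm (k : ℕ) (z : ℂ) : directionalPart k z ≤ ‖z‖ := by
  refine max_le ((Complex.re_le_norm _).trans_eq ?_) (norm_nonneg z)
  rw [norm_mul, norm_pow, norm_neg, Complex.norm_I, one_pow, one_mul]

lemma sum_directionalPart (z : ℂ) :
    ∑ k ∈ Finset.range 4, Complex.I ^ k * (directionalPart k z : ℂ) = z := by
  have hI3 : Complex.I ^ 3 = -Complex.I := by rw [pow_succ, Complex.I_sq, neg_one_mul]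
  have hre := max_zero_sub_max_neg_zero_eq_self z.re
  have him := max_zero_sub_max_neg_zero_eq_self z.im
  apply Complex.ext <;>
    simp [directionalPart, Finset.sum_range_succ, hI3, Odd.neg_pow (by decide : Odd 3)] <;> linarith

lemma norm_le_sum_directionalPart (z : ℂ) : ‖z‖ ≤ ∑ k ∈ Finset.range 4, directionalPart k z := by
  conv_lhs => rw [← sum_directionalPart z]
  refine (norm_sum_le _ _).trans_eq (Finset.sum_congr rfl fun k _ => ?_)
  rw [norm_mul, norm_pow, Complex.norm_I, one_pow, one_mul, Complex.norm_real, Real.norm_eq_abs,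
    abs_of_nonneg (directionalPart_nonneg k z)]

lemma integrable_directionalPart {α : Type*} [MeasurableSpace α] {μ : Measure α} {u : α → ℂ}
    (hu : Integrable u μ) (k : ℕ) : Integrable (fun x => directionalPart k (u x)) μ :=
  hu.mono ((continuous_directionalPart k).comp_aestronglyMeasurable hu.aestronglyMeasurable)
    (Eventually.of_forall fun x => by
      rw [Real.norm_of_nonneg (directionalPart_nonneg k _)]
      exact directionalPart_le_norm k _)

/-! ### Uniform integrability -/

lemma symmDiff_limsup_subset {α : Type*} (s : ℕ → Set α) (N : ℕ) :
    s N ∆ limsup s atTop ⊆ ⋃ i, s (N + i) ∆ s (N + i + 1) := by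
  intro x hx
  by_contra hnot
  simp only [mem_iUnion, not_exists, mem_symmDiff] at hnot
  have hstep : ∀ i, x ∈ s (N + i) ↔ x ∈ s N := fun i => by
    induction i with
    | zero => rfl
    | succ i ih => rw [← ih, ← add_assoc]; have := hnot i; tauto
  have hlimsup : x ∈ limsup s atTop ↔ x ∈ s N := by
    rw [mem_limsup_iff_frequently_mem, frequently_congr (q := fun _ => x ∈ s N), frequently_const]
    refine eventually_atTop.2 ⟨N, fun n hn => ?_⟩
    obtain ⟨i, rfl⟩ := Nat.exists_eq_add_of_le hn
    exact hstep i
  rw [mem_symmDiff] at hx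
  tauto

section UniformIntegrability

variable {α : Type*} [MeasurableSpace α] {μ : Measure α}

lemma eLpNorm_one_indicator_eq_ofReal_setIntegral {E : Type*} [NormedAddCommGroup E] {f : α → E}
    {s : Set α} (hs : MeasurableSet s) (hf : Integrable f μ) :
    eLpNorm (s.indicator f) 1 μ = ENNReal.ofReal (∫ x in s, ‖f x‖ ∂μ) := by
  rw [eLpNorm_indicator_eq_eLpNorm_restrict hs, eLpNorm_one_eq_lintegral_enorm,
    ofReal_integral_norm_eq_lintegral_enorm hf.integrableOn]

lemma le_log_add_mul_exp {η : ℝ} (hη : 0 < η) (b : ℝ) : b ≤ Real.log η⁻¹ + η * Real.exp b := by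
  have h := Real.add_one_le_exp (b - Real.log η⁻¹)
  rw [Real.exp_sub, Real.exp_log (inv_pos.2 hη), div_inv_eq_mul, mul_comm] at h
  linarith

lemma integrable_of_lintegral_ofReal_le {f : α → ℝ} {K : ℝ} (hf : AEStronglyMeasurable f μ)
    (h0 : ∀ x, 0 ≤ f x) (hK : ∫⁻ x, ENNReal.ofReal (f x) ∂μ ≤ ENNReal.ofReal K) :
    Integrable f μ :=
  ⟨hf, (hasFiniteIntegral_iff_ofReal (Eventually.of_forall h0)).2
    (hK.trans_lt ENNReal.ofReal_lt_top)⟩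

lemma mul_setIntegral_norm_le [IsFiniteMeasure μ] {w : α → ℂ} {c η : ℝ} (hη : 0 < η)
    (hw : Integrable w μ) (hexp : Integrable (fun x => Real.exp (c * ‖w x‖)) μ) (s : Set α) :
    c * ∫ x in s, ‖w x‖ ∂μ
      ≤ μ.real s * Real.log η⁻¹ + η * ∫ x, Real.exp (c * ‖w x‖) ∂μ := calc
  c * ∫ x in s, ‖w x‖ ∂μ
    = ∫ x in s, c * ‖w x‖ ∂μ := (integral_const_mul _ _).symm
  _ ≤ ∫ x in s, (Real.log η⁻¹ + η * Real.exp (c * ‖w x‖)) ∂μ :=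
    integral_mono (hw.norm.const_mul c).integrableOn
      ((integrable_const _).add (hexp.const_mul η).integrableOn) fun x => le_log_add_mul_exp hη _
  _ = μ.real s * Real.log η⁻¹ + η * ∫ x in s, Real.exp (c * ‖w x‖) ∂μ := by
    rw [integral_add (integrable_const _) (hexp.const_mul η).integrableOn,
      integral_const_mul, setIntegral_const, smul_eq_mul]
  _ ≤ μ.real s * Real.log η⁻¹ + η * ∫ x, Real.exp (c * ‖w x‖) ∂μ := by
    gcongr _ + η * ?_
    exact setIntegral_le_integral hexp (Eventually.of_forall fun _ => Real.exp_nonneg _)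

lemma unifIntegrable_of_lintegral_exp_le [IsFiniteMeasure μ] {ι : Type*} {w : ι → α → ℂ} {c K : ℝ}
    (hc : 0 < c) (hw : ∀ i, Integrable (w i) μ)
    (hK : ∀ i, ∫⁻ x, ENNReal.ofReal (Real.exp (c * ‖w i x‖)) ∂μ ≤ ENNReal.ofReal K) :
    UnifIntegrable w 1 μ := by
  have hexp : ∀ i, Integrable (fun x => Real.exp (c * ‖w i x‖)) μ := fun i =>
    integrable_of_lintegral_ofReal_le
      (Real.continuous_exp.comp_aestronglyMeasurable ((hw i).norm.const_mul c).1)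
      (fun x => Real.exp_nonneg _) (hK i)
  have hexp_le : ∀ i, ∫ x, Real.exp (c * ‖w i x‖) ∂μ ≤ |K| := fun i => by
    rw [integral_eq_lintegral_of_nonneg_ae (Eventually.of_forall fun _ => Real.exp_nonneg _)
      (hexp i).1]
    exact ENNReal.toReal_le_of_le_ofReal (abs_nonneg K)
      ((hK i).trans (ENNReal.ofReal_le_ofReal (le_abs_self K)))
  intro ε hε
  set η : ℝ := c * ε / (2 * (|K| + 1)) with hη_def
  have hη : 0 < η := by positivity
  set δ : ℝ := c * ε / (2 * (|Real.log η⁻¹| + 1)) with hδ_def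
  refine ⟨δ, by positivity, fun i s hs hμs => ?_⟩
  rw [eLpNorm_one_indicator_eq_ofReal_setIntegral hs (hw i)]
  refine ENNReal.ofReal_le_ofReal (le_of_mul_le_mul_left ?_ hc)
  have hδs : μ.real s ≤ δ := ENNReal.toReal_le_of_le_ofReal (by positivity) hμs
  calc c * ∫ x in s, ‖w i x‖ ∂μ
      ≤ μ.real s * Real.log η⁻¹ + η * ∫ x, Real.exp (c * ‖w i x‖) ∂μ :=
        mul_setIntegral_norm_le hη (hw i) (hexp i) s
    _ ≤ δ * (|Real.log η⁻¹| + 1) + η * (|K| + 1) := by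
        refine add_le_add ((mul_le_mul_of_nonneg_left ?_ measureReal_nonneg).trans
          (mul_le_mul_of_nonneg_right hδs (by positivity)))
          (mul_le_mul_of_nonneg_left ((hexp_le i).trans (lt_add_one _).le) hη.le)
        exact (le_abs_self _).trans (lt_add_one _).le
    _ = c * ε := by
        rw [hδ_def, hη_def]
        field_simp
        ring

/-- Off a set of small measure the limit is within `1` of some `w n`; on that set its `L¹` norm is
bounded by Fatou's lemma and uniform integrability. -/
lemma integrable_of_unifIntegrable_of_tendsto [IsFiniteMeasure μ] {w : ℕ → α → ℂ} {v : α → ℂ}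
    (hw : ∀ n, Integrable (w n) μ) (hUI : UnifIntegrable w 1 μ)
    (hlim : ∀ᵐ x ∂μ, Tendsto (fun n => w n x) atTop (𝓝 (v x))) : Integrable v μ := by
  have hv : AEStronglyMeasurable v μ :=
    aestronglyMeasurable_of_tendsto_ae atTop (fun n => (hw n).1) hlim
  obtain ⟨δ, hδ, hsmall⟩ := hUI one_pos
  obtain ⟨n, hn⟩ := ((tendstoInMeasure_iff_norm.1
    (tendstoInMeasure_of_tendsto_ae (fun n => (hw n).1) hlim) 1 one_pos).eventually
    (gt_mem_nhds (ENNReal.ofReal_pos.2 hδ))).exists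
  set s := toMeasurable μ {x | 1 ≤ ‖w n x - v x‖}
  have hs : MeasurableSet s := measurableSet_toMeasurable _ _
  have hμs : μ s ≤ ENNReal.ofReal δ := (measure_toMeasurable _).trans_le hn.le
  have hv_on : Integrable (s.indicator v) μ := by
    have hnorm : eLpNorm (s.indicator v) 1 μ ≤ ENNReal.ofReal 1 := by
      refine Lp.eLpNorm_le_of_ae_tendsto (u := atTop)
        (Eventually.of_forall fun m => hsmall m s hs hμs) (fun m => (hw m).1.indicator hs) ?_
      filter_upwards [hlim] with x hx
      by_cases hxs : x ∈ s <;> simp [hxs, hx]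
    exact memLp_one_iff_integrable.1 ⟨hv.indicator hs, hnorm.trans_lt ENNReal.ofReal_lt_top⟩
  have hv_off : Integrable (sᶜ.indicator v) μ := by
    refine ((hw n).norm.add (integrable_const 1)).mono' (hv.indicator hs.compl)
      (Eventually.of_forall fun x => ?_)
    by_cases hxs : x ∈ s
    · simpa [hxs] using add_nonneg (norm_nonneg (w n x)) zero_le_one
    · have hclose : ‖w n x - v x‖ < 1 := not_le.1 fun h => hxs (subset_toMeasurable _ _ h)
      have htri := norm_sub_norm_le (v x) (w n x)
      rw [norm_sub_rev] at htri
      simpa [hxs] using (by linarith : ‖v x‖ ≤ ‖w n x‖ + 1)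
  simpa only [indicator_self_add_compl] using hv_on.add hv_off

lemma tendsto_integral_of_unifIntegrable [IsFiniteMeasure μ] {w : ℕ → α → ℂ} {v : α → ℂ}
    (hw : ∀ n, Integrable (w n) μ) (hUI : UnifIntegrable w 1 μ)
    (hlim : ∀ᵐ x ∂μ, Tendsto (fun n => w n x) atTop (𝓝 (v x))) :
    Tendsto (fun n => ∫ x, w n x ∂μ) atTop (𝓝 (∫ x, v x ∂μ)) := by
  have hv := integrable_of_unifIntegrable_of_tendsto hw hUI hlim
  exact tendsto_integral_of_L1' v hv.1 (Eventually.of_forall hw)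
    (tendsto_Lp_finite_of_tendsto_ae le_rfl ENNReal.one_ne_top (fun n => (hw n).1)
      (memLp_one_iff_integrable.2 hv) hUI hlim)

/-- A sequence of sets that is Cauchy fast enough converges to its limit superior. -/
instance completeSpace_measuredSets : CompleteSpace (MeasuredSets μ) := by
  refine EMetric.complete_of_convergent_controlled_sequences (fun n => 2⁻¹ ^ n)
    (fun n => ENNReal.pow_pos (by simp) n) fun s hs => ?_
  let L : MeasuredSets μ :=
    ⟨limsup (fun n => (s n : Set α)) atTop, .measurableSet_limsup fun n => (s n).2⟩
  have hgeom : Tendsto (fun N : ℕ => (2⁻¹ : ℝ≥0∞) ^ N * 2) atTop (𝓝 0) := by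
    simpa using ENNReal.Tendsto.mul_const (b := 2)
      (ENNReal.tendsto_pow_atTop_nhds_zero_of_lt_one (by simp : (2⁻¹ : ℝ≥0∞) < 1)) (by simp)
  refine ⟨L, tendsto_iff_edist_tendsto_0.2 (tendsto_of_tendsto_of_tendsto_of_le_of_le
    tendsto_const_nhds hgeom (fun _ => zero_le) fun N => ?_)⟩
  calc μ ((s N : Set α) ∆ limsup (fun n => (s n : Set α)) atTop)
      ≤ ∑' i, μ ((s (N + i) : Set α) ∆ s (N + i + 1)) :=
        (measure_mono (symmDiff_limsup_subset (fun n => (s n : Set α)) N)).trans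
          (measure_iUnion_le _)
    _ ≤ ∑' i, 2⁻¹ ^ N * 2⁻¹ ^ i := ENNReal.tsum_le_tsum fun i =>
        (hs (N + i) _ _ le_rfl (Nat.le_succ _)).le.trans_eq (pow_add _ _ _)
    _ = 2⁻¹ ^ N * 2 := by rw [ENNReal.tsum_mul_left, ENNReal.tsum_geometric_two]

lemma norm_setIntegral_sub_setIntegral_le {w : α → ℂ} (hw : Integrable w μ) {s t : Set α}
    (hs : MeasurableSet s) (ht : MeasurableSet t) :
    ‖∫ x in s, w x ∂μ - ∫ x in t, w x ∂μ‖ ≤ ∫ x in s ∆ t, ‖w x‖ ∂μ := by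
  rw [← integral_indicator hs, ← integral_indicator ht,
    ← integral_sub (hw.indicator hs) (hw.indicator ht), ← integral_indicator (hs.symmDiff ht)]
  refine norm_integral_le_of_norm_le (hw.norm.indicator (hs.symmDiff ht))
    (Eventually.of_forall fun x => ?_)
  by_cases hxs : x ∈ s <;> by_cases hxt : x ∈ t <;> simp [hxs, hxt, mem_symmDiff]

lemma continuous_setIntegral_measuredSets {w : α → ℂ} (hw : Integrable w μ) :
    Continuous fun s : MeasuredSets μ => ∫ x in (s : Set α), w x ∂μ := by
  refine continuous_iff_continuousAt.2 fun t => tendsto_iff_norm_sub_tendsto_zero.2 ?_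
  have hμ : Tendsto (fun s : MeasuredSets μ => μ ((s : Set α) ∆ t)) (𝓝 t) (𝓝 0) :=
    tendsto_iff_edist_tendsto_0.1 tendsto_id
  refine squeeze_zero (fun _ => norm_nonneg _)
    (fun s => norm_setIntegral_sub_setIntegral_le hw s.2 t.2) ?_
  exact hw.norm.tendsto_setIntegral_nhds_zero hμ

/-- Baire's theorem in the complete space of measurable sets, where the set integrals of an
integrable function are continuous: the Cauchy condition is uniform on some ball, and a small set is
the difference of two members of that ball. -/
lemma exists_forall_norm_setIntegral_sub_le {w : ℕ → α → ℂ} [IsFiniteMeasure μ]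
    (hw : ∀ n, Integrable (w n) μ)
    (hconv : ∀ s, MeasurableSet s → ∃ l, Tendsto (fun n => ∫ x in s, w n x ∂μ) atTop (𝓝 l))
    {ε : ℝ} (hε : 0 < ε) :
    ∃ p : ℕ, ∃ δ > 0, ∀ n ≥ p, ∀ s, MeasurableSet s → μ s ≤ ENNReal.ofReal δ →
      ‖∫ x in s, (w n x - w p x) ∂μ‖ ≤ ε := by
  let F : ℕ → Set (MeasuredSets μ) := fun p =>
    ⋂ n ≥ p, {s | ‖∫ x in (s : Set α), w n x ∂μ - ∫ x in (s : Set α), w p x ∂μ‖ ≤ ε / 2}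
  have hF_closed : ∀ p, IsClosed (F p) := fun p => isClosed_biInter fun n _ => isClosed_le
    ((continuous_setIntegral_measuredSets (hw n)).sub
      (continuous_setIntegral_measuredSets (hw p))).norm continuous_const
  have hF_cover : ⋃ p, F p = univ := by
    refine eq_univ_of_forall fun s => ?_
    obtain ⟨l, hl⟩ := hconv s s.2
    obtain ⟨p, hp⟩ := Metric.cauchySeq_iff'.1 hl.cauchySeq (ε / 2) (half_pos hε)
    exact mem_iUnion.2 ⟨p, mem_iInter₂.2 fun n hn => by
      simpa only [mem_ofPred_eq, ← dist_eq_norm] using (hp n hn).le⟩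
  have : Nonempty (MeasuredSets μ) := ⟨⟨∅, .empty⟩⟩
  obtain ⟨p, t, ht⟩ := nonempty_interior_of_iUnion_of_closed hF_closed hF_cover
  obtain ⟨r, hr, hball⟩ := Metric.mem_nhds_iff.1 (mem_interior_iff_mem_nhds.1 ht)
  refine ⟨p, r / 2, half_pos hr, fun n hn s hs hμs => ?_⟩
  have hF_near : ∀ u, MeasurableSet u → u ∆ t ⊆ s →
      ‖∫ x in u, (w n x - w p x) ∂μ‖ ≤ ε / 2 := fun u hu hut => by
    let U : MeasuredSets μ := ⟨u, hu⟩
    have hdist : dist U t < r := by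
      have hU : dist U t ≤ μ.real s := measureReal_mono hut
      have hs_real : μ.real s ≤ r / 2 := ENNReal.toReal_le_of_le_ofReal (half_pos hr).le hμs
      linarith
    rw [integral_sub (hw n).integrableOn (hw p).integrableOn]
    exact mem_iInter₂.1 (hball hdist : U ∈ F p) n hn
  have hunion := hF_near (t ∪ s) (t.2.union hs) (by grind)
  have hdiff := hF_near (t \ s) (t.2.diff hs) (by grind)
  have hint : Integrable (fun x => w n x - w p x) μ := (hw n).sub (hw p)
  have hsplit : ∫ x in s, (w n x - w p x) ∂μ
      = ∫ x in t ∪ s, (w n x - w p x) ∂μ - ∫ x in t \ s, (w n x - w p x) ∂μ := by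
    rw [← sdiff_union_self, setIntegral_union disjoint_sdiff_left hs hint.integrableOn
      hint.integrableOn, add_sub_cancel_left]
  rw [hsplit]
  linarith [norm_sub_le (∫ x in t ∪ s, (w n x - w p x) ∂μ) (∫ x in t \ s, (w n x - w p x) ∂μ)]

lemma setIntegral_norm_le_of_forall_norm_setIntegral_le {w : α → ℂ} (hw : Integrable w μ)
    {s : Set α} (hs : MeasurableSet s) {ε : ℝ}
    (h : ∀ t ⊆ s, MeasurableSet t → ‖∫ x in t, w x ∂μ‖ ≤ ε) : ∫ x in s, ‖w x‖ ∂μ ≤ 4 * ε := by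
  have hparts := integrable_directionalPart hw
  have hpart : ∀ k, ∫ x in s, directionalPart k (w x) ∂μ ≤ ε := fun k => by
    set P := {x | 0 ≤ ((-Complex.I) ^ k * hw.1.mk w x).re}
    have hP : MeasurableSet P := measurableSet_le measurable_const (Complex.measurable_re.comp
      (hw.1.stronglyMeasurable_mk.measurable.const_mul _))
    have hrot : Integrable (fun x => (-Complex.I) ^ k * w x) μ := hw.const_mul _
    calc ∫ x in s, directionalPart k (w x) ∂μ
        = ∫ x in s, P.indicator (fun x => ((-Complex.I) ^ k * w x).re) x ∂μ := by
          refine integral_congr_ae (ae_restrict_of_ae (hw.1.ae_eq_mk.mono fun x hx => ?_))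
          by_cases hxP : x ∈ P
          · rw [indicator_of_mem hxP]
            exact max_eq_left (hx ▸ hxP)
          · rw [indicator_of_notMem hxP]
            exact max_eq_right (hx ▸ (not_le.1 hxP).le)
      _ = ((-Complex.I) ^ k * ∫ x in s ∩ P, w x ∂μ).re := by
          rw [setIntegral_indicator hP, ← integral_const_mul]
          exact integral_re hrot.integrableOn
      _ ≤ ε := by
          refine (Complex.re_le_norm _).trans ?_
          rw [norm_mul, norm_pow, norm_neg, Complex.norm_I, one_pow, one_mul]
          exact h _ inter_subset_left (hs.inter hP)
  calc ∫ x in s, ‖w x‖ ∂μ ≤ ∫ x in s, ∑ k ∈ Finset.range 4, directionalPart k (w x) ∂μ :=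
        integral_mono hw.norm.integrableOn
          (integrable_finsetSum _ fun k _ => (hparts k).integrableOn)
          fun x => norm_le_sum_directionalPart (w x)
    _ = ∑ k ∈ Finset.range 4, ∫ x in s, directionalPart k (w x) ∂μ :=
        integral_finsetSum _ fun k _ => (hparts k).integrableOn
    _ ≤ ∑ _k ∈ Finset.range 4, ε := Finset.sum_le_sum fun k _ => hpart k
    _ = 4 * ε := by simp

/-- The Vitali–Hahn–Saks theorem. -/
lemma unifIntegrable_of_tendsto_setIntegral [IsFiniteMeasure μ] {w : ℕ → α → ℂ}
    (hw : ∀ n, Integrable (w n) μ)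
    (hconv : ∀ s, MeasurableSet s → ∃ l, Tendsto (fun n => ∫ x in s, w n x ∂μ) atTop (𝓝 l)) :
    UnifIntegrable w 1 μ := by
  intro ε hε
  obtain ⟨p, δ₁, hδ₁, htail⟩ := exists_forall_norm_setIntegral_sub_le hw hconv
    (ε := ε / 8) (by positivity)
  obtain ⟨δ₂, hδ₂, hhead⟩ := unifIntegrable_fin (n := p + 1) le_rfl ENNReal.one_ne_top
    (fun i => memLp_one_iff_integrable.2 (hw i)) (half_pos hε)
  refine ⟨min δ₁ δ₂, lt_min hδ₁ hδ₂, fun n s hs hμs => ?_⟩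
  have hμs₁ := hμs.trans (ENNReal.ofReal_le_ofReal (min_le_left _ _))
  have hμs₂ := hμs.trans (ENNReal.ofReal_le_ofReal (min_le_right _ _))
  rcases lt_or_ge n (p + 1) with hn | hn
  · exact (hhead ⟨n, hn⟩ s hs hμs₂).trans (ENNReal.ofReal_le_ofReal (half_le_self hε.le))
  have hdiff : ∫ x in s, ‖w n x - w p x‖ ∂μ ≤ 4 * (ε / 8) :=
    setIntegral_norm_le_of_forall_norm_setIntegral_le ((hw n).sub (hw p)) hs fun t hts ht =>
      htail n (by omega) t ht ((measure_mono hts).trans hμs₁)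
  calc eLpNorm (s.indicator (w n)) 1 μ
      = eLpNorm (s.indicator (w n - w p) + s.indicator (w p)) 1 μ := by
        rw [← indicator_add', sub_add_cancel]
    _ ≤ ENNReal.ofReal (ε / 2) + ENNReal.ofReal (ε / 2) := by
        refine (eLpNorm_add_le (((hw n).sub (hw p)).1.indicator hs) ((hw p).1.indicator hs)
          le_rfl).trans (add_le_add ?_ (hhead ⟨p, p.lt_succ_self⟩ s hs hμs₂))
        rw [eLpNorm_one_indicator_eq_ofReal_setIntegral hs ((hw n).sub (hw p))]
        exact ENNReal.ofReal_le_ofReal (hdiff.trans_eq (by ring))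
    _ = ENNReal.ofReal ε := by rw [← ENNReal.ofReal_add (by positivity) (by positivity), add_halves]

end UniformIntegrability

/-! ### Bounded holomorphic functions on the upper half-plane -/

section ContourShift

variable {Φ : ℂ → ℂ} {C R₀ : ℝ}

lemma norm_intervalIntegral_neg_le_of_norm_le_div_sq (hd : DifferentiableOn ℂ Φ {z | 0 ≤ z.im})
    (hC : 0 ≤ C) (hb : ∀ z : ℂ, 0 ≤ z.im → R₀ ≤ ‖z‖ → ‖Φ z‖ ≤ C / ‖z‖ ^ 2) {R : ℝ} (hR : 0 < R)
    (hRR₀ : R₀ ≤ R) : ‖∫ t in (-R)..R, Φ t‖ ≤ 4 * C / R := by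
  have hside : ∀ z : ℂ, 0 ≤ z.im → R ≤ ‖z‖ → ‖Φ z‖ ≤ C / R ^ 2 := fun z hz hzR =>
    (hb z hz (hRR₀.trans hzR)).trans (by gcongr)
  have htop : ‖∫ x in (-R)..R, Φ (x + R * Complex.I)‖ ≤ C / R ^ 2 * |R - -R| := by
    refine intervalIntegral.norm_integral_le_of_norm_le_const fun x _ =>
      hside _ (by simp [hR.le]) ?_
    simpa [abs_of_pos hR] using Complex.abs_im_le_norm (x + R * Complex.I)
  have hvert : ∀ c : ℝ, |c| = R →
      ‖∫ y in (0 : ℝ)..R, Φ (c + y * Complex.I)‖ ≤ C / R ^ 2 * |R - 0| := fun c hc => by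
    refine intervalIntegral.norm_integral_le_of_norm_le_const fun y hy => ?_
    rw [uIoc_of_le hR.le] at hy
    refine hside _ (by simp [hy.1.le]) ?_
    simpa [hc] using Complex.abs_re_le_norm (c + y * Complex.I)
  have hright := hvert R (abs_of_pos hR)
  have hleft := hvert (-R) (by rw [abs_neg, abs_of_pos hR])
  have hrect := Complex.integral_boundary_rect_eq_zero_of_differentiableOn Φ
    (-R : ℂ) (R + R * Complex.I) (hd.mono fun z hz => by
      have hz_im := hz.2
      simp only [Complex.neg_im, Complex.ofReal_im, neg_zero, Complex.add_im, Complex.mul_im,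
        Complex.I_im, Complex.I_re, Complex.ofReal_re, mul_one, mul_zero, add_zero, zero_add,
        uIcc_of_le hR.le] at hz_im
      exact hz_im.1)
  have hbottom : ∫ t in (-R)..R, Φ t = (∫ x in (-R)..R, Φ (x + R * Complex.I))
      - Complex.I * (∫ y in (0 : ℝ)..R, Φ (R + y * Complex.I))
      + Complex.I * ∫ y in (0 : ℝ)..R, Φ ((-R : ℝ) + y * Complex.I) := by
    simp only [Complex.neg_re, Complex.ofReal_re, Complex.add_re, Complex.mul_re, Complex.I_re,
      mul_zero, Complex.ofReal_im, Complex.I_im, mul_one, sub_self, add_zero, Complex.neg_im,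
      neg_zero, Complex.ofReal_zero, zero_mul, Complex.add_im, Complex.mul_im, zero_add,
      smul_eq_mul] at hrect
    linear_combination hrect
  calc ‖∫ t in (-R)..R, Φ t‖
      ≤ C / R ^ 2 * |R - -R| + C / R ^ 2 * |R - 0| + C / R ^ 2 * |R - 0| := by
        rw [hbottom]
        refine (norm_add_le _ _).trans
          (add_le_add ((norm_sub_le _ _).trans (add_le_add htop ?_)) ?_)
        all_goals rwa [norm_mul, Complex.norm_I, one_mul]
    _ = 4 * C / R := by
        rw [abs_of_pos (by linarith), abs_of_pos (by linarith)]
        field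

lemma integral_ofReal_eq_zero_of_norm_le_div_sq (hd : DifferentiableOn ℂ Φ {z | 0 ≤ z.im})
    (hC : 0 ≤ C) (hb : ∀ z : ℂ, 0 ≤ z.im → R₀ ≤ ‖z‖ → ‖Φ z‖ ≤ C / ‖z‖ ^ 2)
    (hint : Integrable fun t : ℝ => Φ t) : ∫ t : ℝ, Φ t = 0 := by
  refine tendsto_nhds_unique
    (intervalIntegral_tendsto_integral hint tendsto_neg_atTop_atBot tendsto_id) ?_
  refine squeeze_zero_norm' ?_ (tendsto_const_nhds.div_atTop tendsto_id : Tendsto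
    (fun R : ℝ => 4 * C / R) atTop (𝓝 0))
  filter_upwards [eventually_ge_atTop R₀, eventually_gt_atTop 0] with R hRR₀ hR
  exact norm_intervalIntegral_neg_le_of_norm_le_div_sq hd hC hb hR hRR₀

end ContourShift

/-- The Poisson kernel of the upper half-plane at height `ε`, without the factor `π⁻¹`. -/
def halfPlanePoisson (ε s : ℝ) : ℝ := ε / (s ^ 2 + ε ^ 2)

/-- The conjugate Poisson kernel of the upper half-plane at height `ε`, without the factor `π⁻¹`;
it regularizes `1 / s`. -/
def halfPlaneConjPoisson (ε s : ℝ) : ℝ := s / (s ^ 2 + ε ^ 2)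

section PoissonKernel

variable {ε : ℝ}

lemma halfPlanePoisson_nonneg (hε : 0 ≤ ε) (s : ℝ) : 0 ≤ halfPlanePoisson ε s := by
  unfold halfPlanePoisson
  positivity

lemma halfPlanePoisson_eq_inv_mul (hε : 0 < ε) (s : ℝ) :
    halfPlanePoisson ε s = ε⁻¹ * (1 + (s / ε) ^ 2)⁻¹ := by
  unfold halfPlanePoisson
  field_simp
  ring

lemma inv_ofReal_sub_mul_I (hε : 0 < ε) (s : ℝ) :
    ((s : ℂ) - ε * Complex.I)⁻¹
      = halfPlaneConjPoisson ε s + halfPlanePoisson ε s * Complex.I := by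
  have hne : (s : ℂ) ^ 2 + (ε : ℂ) ^ 2 ≠ 0 := by
    exact_mod_cast (by positivity : s ^ 2 + ε ^ 2 ≠ 0)
  refine inv_eq_of_mul_eq_one_left ?_
  unfold halfPlaneConjPoisson halfPlanePoisson
  push_cast
  field_simp
  linear_combination (-(ε : ℂ) ^ 2) * Complex.I_sq

lemma integrable_halfPlanePoisson_sub (hε : 0 < ε) (x : ℝ) :
    Integrable fun t => halfPlanePoisson ε (t - x) := by
  simp_rw [halfPlanePoisson_eq_inv_mul hε]
  exact ((integrable_inv_one_add_sq.comp_div hε.ne').comp_sub_right x).const_mul ε⁻¹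

lemma integral_halfPlanePoisson_sub (hε : 0 < ε) (x : ℝ) :
    ∫ t, halfPlanePoisson ε (t - x) = Real.pi := by
  simp_rw [halfPlanePoisson_eq_inv_mul hε]
  rw [integral_const_mul, integral_sub_right_eq_self (fun t => (1 + (t / ε) ^ 2)⁻¹) x,
    Measure.integral_comp_div (fun t => (1 + t ^ 2)⁻¹) ε, integral_univ_inv_one_add_sq,
    abs_of_pos hε, smul_eq_mul, inv_mul_cancel_left₀ hε.ne']

end PoissonKernel

section PoissonFormula

variable {H : ℂ → ℂ} {M : ℝ}

lemma integrable_mul_halfPlanePoisson (hd : DifferentiableOn ℂ H {z | 0 ≤ z.im})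
    (hM : ∀ z : ℂ, 0 ≤ z.im → ‖H z‖ ≤ M) (x : ℝ) {y : ℝ} (hy : 0 < y) :
    Integrable fun t : ℝ => H t * (halfPlanePoisson y (t - x) : ℂ) := by
  have hcont : Continuous fun t : ℝ => H t :=
    hd.continuousOn.comp_continuous Complex.continuous_ofReal fun _ => by simp
  exact (integrable_halfPlanePoisson_sub hy x).ofReal.bdd_mul (c := M) hcont.aestronglyMeasurable
    (Eventually.of_forall fun _ => hM _ (by simp))

lemma norm_dslope_div_le (hM : ∀ z : ℂ, 0 ≤ z.im → ‖H z‖ ≤ M) {w z : ℂ} (hw : 0 < w.im)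
    (hz : 0 ≤ z.im) (hzw : 2 * ‖w‖ ≤ ‖z‖) :
    ‖dslope H w z / (z - starRingEnd ℂ w)‖ ≤ 8 * M / ‖z‖ ^ 2 := by
  have hw_pos : 0 < ‖w‖ := hw.trans_le ((le_abs_self _).trans (Complex.abs_im_le_norm w))
  have hz_pos : 0 < ‖z‖ := by linarith
  have hM0 : 0 ≤ M := (norm_nonneg _).trans (hM z hz)
  have hsub : ‖z‖ / 2 ≤ ‖z - w‖ := by linarith [norm_sub_norm_le z w]
  have hsub_conj : ‖z‖ / 2 ≤ ‖z - starRingEnd ℂ w‖ := by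
    have := norm_sub_norm_le z (starRingEnd ℂ w)
    rw [Complex.norm_conj] at this
    linarith
  have hne : z ≠ w := fun h => by
    rw [h] at hzw
    linarith
  rw [dslope_of_ne _ hne, slope_def_field, div_div, norm_div, norm_mul]
  calc ‖H z - H w‖ / (‖z - w‖ * ‖z - starRingEnd ℂ w‖)
      ≤ (M + M) / (‖z‖ / 2 * (‖z‖ / 2)) := by
        gcongr
        exact (norm_sub_le _ _).trans (add_le_add (hM z hz) (hM w hw.le))
    _ = 8 * M / ‖z‖ ^ 2 := by field

lemma dslope_div_ofReal {x y : ℝ} (hy : 0 < y) (t : ℝ) :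
    dslope H (x + y * Complex.I) t / (t - starRingEnd ℂ (x + y * Complex.I))
      = (y : ℂ)⁻¹ * ((H t - H (x + y * Complex.I)) * halfPlanePoisson y (t - x)) := by
  have hne : (t : ℂ) ≠ x + y * Complex.I := fun h => by
    simpa using hy.ne (by simpa using congrArg Complex.im h)
  have hyc : (y : ℂ) ≠ 0 := by exact_mod_cast hy.ne'
  have hprod : ((t : ℂ) - (x + y * Complex.I)) * (t - starRingEnd ℂ (x + y * Complex.I))
      = (t - x) ^ 2 + y ^ 2 := by
    simp only [map_add, map_mul, Complex.conj_ofReal, Complex.conj_I]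
    linear_combination (-(y : ℂ) ^ 2) * Complex.I_sq
  rw [dslope_of_ne _ hne, slope_def_field, div_div, hprod]
  unfold halfPlanePoisson
  push_cast
  field

lemma integral_mul_halfPlanePoisson (hd : DifferentiableOn ℂ H {z | 0 ≤ z.im})
    (hM : ∀ z : ℂ, 0 ≤ z.im → ‖H z‖ ≤ M) (x : ℝ) {y : ℝ} (hy : 0 < y) :
    ∫ t : ℝ, H t * (halfPlanePoisson y (t - x) : ℂ) = Real.pi * H (x + y * Complex.I) := by
  set w : ℂ := x + y * Complex.I with hw
  have hw_im : w.im = y := by simp [hw]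
  have hM0 : 0 ≤ M := (norm_nonneg _).trans (hM 0 le_rfl)
  have hkernel : Integrable fun t : ℝ => H w * (halfPlanePoisson y (t - x) : ℂ) :=
    (integrable_halfPlanePoisson_sub hy x).ofReal.const_mul _
  have hint := integrable_mul_halfPlanePoisson hd hM x hy
  have hΦd : DifferentiableOn ℂ (fun z => dslope H w z / (z - starRingEnd ℂ w))
      {z | 0 ≤ z.im} := by
    have hnhds : {z : ℂ | 0 ≤ z.im} ∈ 𝓝 w :=
      mem_of_superset ((isOpen_lt continuous_const Complex.continuous_im).mem_nhds
        (by simpa [hw_im] using hy : (0 : ℝ) < w.im)) 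
        fun z hz => show 0 ≤ z.im from le_of_lt hz
    refine ((Complex.differentiableOn_dslope hnhds).2 hd).div (by fun_prop) fun z hz h => ?_
    have him := congrArg Complex.im (sub_eq_zero.1 h)
    rw [Complex.conj_im, hw_im] at him
    linarith [mem_ofPred_eq ▸ hz]
  have hzero := integral_ofReal_eq_zero_of_norm_le_div_sq hΦd (by positivity : 0 ≤ 8 * M)
    (fun z hz hzw => norm_dslope_div_le hM (hw_im ▸ hy) hz hzw) (by
      simp_rw [hw, dslope_div_ofReal hy, sub_mul]
      exact (hint.sub hkernel).const_mul _)
  simp_rw [hw, dslope_div_ofReal hy, ← hw, sub_mul] at hzero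
  rw [integral_const_mul, integral_sub hint hkernel, integral_const_mul, integral_complex_ofReal,
    integral_halfPlanePoisson_sub hy] at hzero
  have hyc : (y : ℂ)⁻¹ ≠ 0 := inv_ne_zero (by exact_mod_cast hy.ne')
  linear_combination (mul_eq_zero.1 hzero).resolve_left hyc

end PoissonFormula

lemma im_add_mul_I (z : ℂ) (δ : ℝ) : (z + δ * Complex.I).im = z.im + δ := by simp

lemma differentiableOn_comp_add_mul_I {H : ℂ → ℂ} (hd : DifferentiableOn ℂ H {z | 0 < z.im})
    {δ : ℝ} (hδ : 0 < δ) : DifferentiableOn ℂ (fun z => H (z + δ * Complex.I)) {z | 0 ≤ z.im} :=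
  hd.comp (by fun_prop) fun z (hz : 0 ≤ z.im) =>
    show 0 < (z + δ * Complex.I).im by linarith [im_add_mul_I z δ]

instance isFiniteMeasure_μI : IsFiniteMeasure μI := by
  unfold μI
  infer_instance

lemma μI_le_volume : μI ≤ volume := Measure.restrict_le_self

lemma lintegral_re_le {H : ℂ → ℂ} {M : ℝ} (hd : DifferentiableOn ℂ H {z | 0 ≤ z.im})
    (hM : ∀ z : ℂ, 0 ≤ z.im → ‖H z‖ ≤ M) (hre : ∀ t : ℝ, 0 ≤ (H t).re) :
    ∫⁻ t : ℝ, ENNReal.ofReal (H t).re ∂μI ≤ ENNReal.ofReal (2 * Real.pi * (H Complex.I).re) := by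
  have hint : Integrable fun t : ℝ => (H t).re * halfPlanePoisson 1 t := by
    simpa using (integrable_mul_halfPlanePoisson hd hM 0 one_pos).re
  have hval : ∫ t : ℝ, (H t).re * halfPlanePoisson 1 t = Real.pi * (H Complex.I).re := by
    have h := congrArg Complex.re (integral_mul_halfPlanePoisson hd hM 0 one_pos)
    rw [← RCLike.re_eq_complex_re, ← integral_re (integrable_mul_halfPlanePoisson hd hM 0 one_pos)]
      at h
    simpa using h
  calc ∫⁻ t : ℝ, ENNReal.ofReal (H t).re ∂μI
      ≤ ∫⁻ t : ℝ, ENNReal.ofReal (2 * ((H t).re * halfPlanePoisson 1 t)) ∂μI := by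
        unfold μI
        refine setLIntegral_mono' measurableSet_Ioo fun t ht => ENNReal.ofReal_le_ofReal ?_
        have hkernel : 1 / 2 ≤ halfPlanePoisson 1 t := by
          unfold halfPlanePoisson
          rw [div_le_div_iff₀ (by norm_num) (by positivity)]
          nlinarith [ht.1, ht.2]
        nlinarith [hre t]
    _ ≤ ∫⁻ t : ℝ, ENNReal.ofReal (2 * ((H t).re * halfPlanePoisson 1 t)) :=
        setLIntegral_le_lintegral _ _
    _ = ENNReal.ofReal (∫ t : ℝ, 2 * ((H t).re * halfPlanePoisson 1 t)) := by
        rw [ofReal_integral_eq_lintegral_ofReal (hint.const_mul 2)]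
        exact Eventually.of_forall fun t =>
          mul_nonneg zero_le_two (mul_nonneg (hre t) (halfPlanePoisson_nonneg zero_le_one t))
    _ = ENNReal.ofReal (2 * Real.pi * (H Complex.I).re) := by
        rw [integral_const_mul, hval, mul_assoc]

lemma lintegral_re_add_mul_I_le {G : ℂ → ℂ} {δ M c : ℝ}
    (hd : DifferentiableOn ℂ G {z | 0 < z.im}) (hδ : 0 < δ)
    (hM : ∀ z : ℂ, δ ≤ z.im → ‖G z‖ ≤ M) (hre : ∀ z : ℂ, 0 < z.im → 0 ≤ (G z).re)
    (hc : ∀ z : ℂ, 1 ≤ z.im → (G z).re ≤ c) :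
    ∫⁻ t : ℝ, ENNReal.ofReal (G (t + δ * Complex.I)).re ∂μI ≤ ENNReal.ofReal (2 * Real.pi * c) := by
  refine (lintegral_re_le (differentiableOn_comp_add_mul_I hd hδ)
    (fun z hz => hM _ (by linarith [im_add_mul_I z δ])) fun t => hre _ (by simpa using hδ)).trans
    (ENNReal.ofReal_le_ofReal ?_)
  gcongr
  exact hc _ (by simpa using hδ.le)

/-! ### Fatou's theorem on vertical boundary limits -/

section SlopeKernel

/-- Minus the derivative of `r ↦ (1 + r²)⁻¹`: integrating by parts, a Poisson integral becomes an
average against this kernel of the difference quotients of a primitive. -/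
def slopeKernel (r : ℝ) : ℝ := 2 * r / (1 + r ^ 2) ^ 2

lemma continuous_slopeKernel : Continuous slopeKernel :=
  Continuous.div (by fun_prop) (by fun_prop) fun r => by positivity

lemma hasDerivAt_inv_one_add_sq (r : ℝ) :
    HasDerivAt (fun r : ℝ => (1 + r ^ 2)⁻¹) (-slopeKernel r) r := by
  have h : HasDerivAt (fun r : ℝ => 1 + r ^ 2) (2 * r) r := by
    simpa using ((hasDerivAt_id r).pow 2).const_add 1
  have hinv := h.inv (by positivity)
  rwa [neg_div] at hinv

lemma abs_mul_abs_slopeKernel_le (r : ℝ) : |r| * |slopeKernel r| ≤ 2 * (1 + r ^ 2)⁻¹ := by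
  have h : r * slopeKernel r = 2 * r ^ 2 / (1 + r ^ 2) ^ 2 := by
    unfold slopeKernel
    ring
  rw [← abs_mul, h, abs_of_nonneg (by positivity), ← div_eq_mul_inv,
    div_le_div_iff₀ (by positivity) (by positivity)]
  nlinarith [sq_nonneg r]

lemma norm_mul_slopeKernel_le {M r : ℝ} {a : ℂ} (hM : 0 ≤ M) (ha : ‖a‖ ≤ M * |r|) :
    ‖a * slopeKernel r‖ ≤ M * (2 * (1 + r ^ 2)⁻¹) := by
  rw [norm_mul, Complex.norm_real, Real.norm_eq_abs]
  calc ‖a‖ * |slopeKernel r| ≤ M * (|r| * |slopeKernel r|) := by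
        rw [← mul_assoc]
        gcongr
    _ ≤ M * (2 * (1 + r ^ 2)⁻¹) :=
        mul_le_mul_of_nonneg_left (abs_mul_abs_slopeKernel_le r) hM

lemma integrable_slopeKernel_bound (M : ℝ) : Integrable fun r : ℝ => M * (2 * (1 + r ^ 2)⁻¹) :=
  (integrable_inv_one_add_sq.const_mul 2).const_mul M

lemma tendsto_integral_mul_slopeKernel {l : Filter ℝ} [l.IsCountablyGenerated] {M : ℝ}
    (hM : 0 ≤ M) {q : ℝ → ℝ → ℂ} {q₀ : ℝ → ℂ} (hq : ∀ᶠ i in l, Continuous (q i))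
    (hb : ∀ᶠ i in l, ∀ r, ‖q i r‖ ≤ M * |r|) (hlim : ∀ r, Tendsto (fun i => q i r) l (𝓝 (q₀ r))) :
    Tendsto (fun i => ∫ r, q i r * slopeKernel r) l (𝓝 (∫ r, q₀ r * slopeKernel r)) := by
  refine tendsto_integral_filter_of_dominated_convergence _ ?_ ?_ (integrable_slopeKernel_bound M)
    (Eventually.of_forall fun r => (hlim r).mul_const _)
  · filter_upwards [hq] with i hi
    exact (hi.mul (Complex.continuous_ofReal.comp continuous_slopeKernel)).aestronglyMeasurable
  · filter_upwards [hb] with i hi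
    exact Eventually.of_forall fun r => norm_mul_slopeKernel_le hM (hi r)

lemma tendsto_mul_abs_mul_inv_one_add_sq (M : ℝ) {l : Filter ℝ}
    (hl : Tendsto (fun r : ℝ => |r|) l atTop) :
    Tendsto (fun r : ℝ => M * |r| * (1 + r ^ 2)⁻¹) l (𝓝 0) := by
  have hinv : Tendsto (fun r : ℝ => |M| * |r|⁻¹) l (𝓝 0) := by
    simpa using (tendsto_inv_atTop_zero.comp hl).const_mul |M|
  refine squeeze_zero_norm' ?_ hinv
  filter_upwards [hl.eventually_gt_atTop 0] with r hr
  rw [norm_mul, norm_mul, norm_inv, Real.norm_eq_abs, Real.norm_eq_abs, abs_abs, Real.norm_eq_abs,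
    abs_of_pos (by positivity : 0 < 1 + r ^ 2), mul_assoc]
  refine mul_le_mul_of_nonneg_left ?_ (abs_nonneg _)
  rw [← div_eq_mul_inv, div_le_iff₀ (by positivity), inv_mul_eq_div, le_div_iff₀ hr]
  nlinarith [sq_abs r]

lemma integral_deriv_mul_inv_one_add_sq {φ φ' : ℝ → ℂ} {M : ℝ} (hφ : ∀ r, HasDerivAt φ (φ' r) r)
    (hφ' : Continuous φ') (hM : ∀ r, ‖φ' r‖ ≤ M) (hb : ∀ r, ‖φ r‖ ≤ M * |r|) :
    ∫ r, φ' r * ((1 + r ^ 2 : ℝ)⁻¹ : ℝ) = ∫ r, φ r * slopeKernel r := by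
  have hM0 : 0 ≤ M := (norm_nonneg _).trans (hM 0)
  have hφ_cont : Continuous φ := continuous_iff_continuousAt.2 fun r => (hφ r).continuousAt
  have hv : ∀ r : ℝ, HasDerivAt (fun r : ℝ => (((1 + r ^ 2 : ℝ)⁻¹ : ℝ) : ℂ))
      ((-slopeKernel r : ℝ) : ℂ) r := fun r => (hasDerivAt_inv_one_add_sq r).ofReal_comp
  have hv_norm : ∀ r : ℝ, ‖(((1 + r ^ 2 : ℝ)⁻¹ : ℝ) : ℂ)‖ = (1 + r ^ 2)⁻¹ := fun r => by
    rw [Complex.norm_real, Real.norm_eq_abs, abs_of_nonneg (by positivity)]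
  have hφv : Integrable fun r => φ r * ((-slopeKernel r : ℝ) : ℂ) := by
    refine (integrable_slopeKernel_bound M).mono' (hφ_cont.mul (Complex.continuous_ofReal.comp
      continuous_slopeKernel.neg)).aestronglyMeasurable (Eventually.of_forall fun r => ?_)
    rw [Complex.ofReal_neg, mul_neg, norm_neg]
    exact norm_mul_slopeKernel_le hM0 (hb r)
  have hφ'v : Integrable fun r => φ' r * (((1 + r ^ 2 : ℝ)⁻¹ : ℝ) : ℂ) :=
    (integrable_inv_one_add_sq.ofReal).bdd_mul (c := M) hφ'.aestronglyMeasurable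
      (Eventually.of_forall hM)
  have hboundary : ∀ r, ‖φ r * (((1 + r ^ 2 : ℝ)⁻¹ : ℝ) : ℂ)‖ ≤ M * |r| * (1 + r ^ 2)⁻¹ :=
    fun r => by
      rw [norm_mul, hv_norm]
      exact mul_le_mul_of_nonneg_right (hb r) (by positivity)
  have hparts := integral_mul_deriv_eq_deriv_mul (fun r _ => hφ r) (fun r _ => hv r) hφv hφ'v
    (squeeze_zero_norm hboundary (tendsto_mul_abs_mul_inv_one_add_sq M tendsto_abs_atBot_atTop))
    (squeeze_zero_norm hboundary (tendsto_mul_abs_mul_inv_one_add_sq M tendsto_abs_atTop_atTop))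
  simp only [Complex.ofReal_neg, mul_neg, integral_neg] at hparts
  linear_combination hparts

lemma norm_sub_div_le_of_lipschitzWith {ψ : ℝ → ℂ} {K : ℝ≥0} (hψ : LipschitzWith K ψ) (t r : ℝ)
    {ε : ℝ} (hε : 0 < ε) : ‖(ψ (t + ε * r) - ψ t) / ε‖ ≤ K * |r| := by
  rw [norm_div, Complex.norm_real, Real.norm_eq_abs, abs_of_pos hε, div_le_iff₀ hε]
  calc ‖ψ (t + ε * r) - ψ t‖ ≤ K * ‖t + ε * r - t‖ := hψ.norm_sub_le _ _
    _ = K * |r| * ε := by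
        rw [add_sub_cancel_left, Real.norm_eq_abs, abs_mul, abs_of_pos hε]
        ring

lemma integral_mul_halfPlanePoisson_eq_integral_slope {φ Ψ : ℝ → ℂ} {K : ℝ≥0}
    (hΨ : ∀ s, HasDerivAt Ψ (φ s) s) (hφ : Continuous φ) (hK : ∀ s, ‖φ s‖ ≤ K) (t : ℝ) {ε : ℝ}
    (hε : 0 < ε) :
    ∫ s, φ s * halfPlanePoisson ε (s - t) = ∫ r, (Ψ (t + ε * r) - Ψ t) / ε * slopeKernel r := by
  have hεc : (ε : ℂ) ≠ 0 := by exact_mod_cast hε.ne'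
  have hLip : LipschitzWith K Ψ :=
    lipschitzWith_of_nnnorm_deriv_le (fun s => (hΨ s).differentiableAt) fun s => by
      rw [(hΨ s).deriv]
      exact hK s
  have hderiv : ∀ r, HasDerivAt (fun r : ℝ => (Ψ (t + ε * r) - Ψ t) / ε) (φ (t + ε * r)) r :=
    fun r => by
      have hinner : HasDerivAt (fun r : ℝ => t + ε * r) ε r := by
        simpa using ((hasDerivAt_id r).const_mul ε).const_add t
      refine ((((hΨ _).scomp r hinner).sub_const (Ψ t)).div_const (ε : ℂ)).congr_deriv ?_
      rw [Complex.real_smul, mul_div_cancel_left₀ _ hεc]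
  rw [← integral_deriv_mul_inv_one_add_sq hderiv (hφ.comp (by fun_prop)) (fun r => hK _)
    (fun r => norm_sub_div_le_of_lipschitzWith hLip t r hε),
    ← integral_add_left_eq_self (fun s => φ s * (halfPlanePoisson ε (s - t) : ℂ)) t]
  have hscale := Measure.integral_comp_mul_left
    (fun s => φ (t + s) * (halfPlanePoisson ε (t + s - t) : ℂ)) ε
  rw [abs_of_pos (inv_pos.2 hε), Complex.real_smul, Complex.ofReal_inv,
    ← mul_right_inj' hεc, mul_inv_cancel_left₀ hεc] at hscale
  rw [← hscale, ← integral_const_mul]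
  refine integral_congr_ae (Eventually.of_forall fun r => ?_)
  simp only [halfPlanePoisson_eq_inv_mul hε, add_sub_cancel_left, mul_div_cancel_left₀ _ hε.ne',
    Complex.ofReal_mul, Complex.ofReal_inv]
  field

end SlopeKernel

section FatouTheorem

variable {H : ℂ → ℂ} {K : ℝ≥0}

/-- The primitive of `H` along the horizontal line at height `δ`. -/
def horizontalPrimitive (H : ℂ → ℂ) (δ t : ℝ) : ℂ := ∫ s in (0 : ℝ)..t, H (s + δ * Complex.I)

lemma continuous_comp_add_mul_I (hd : DifferentiableOn ℂ H {z | 0 < z.im}) {δ : ℝ} (hδ : 0 < δ) :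
    Continuous fun s : ℝ => H (s + δ * Complex.I) :=
  hd.continuousOn.comp_continuous (by fun_prop) fun _ => by simpa using hδ

lemma hasDerivAt_horizontalPrimitive (hd : DifferentiableOn ℂ H {z | 0 < z.im}) {δ : ℝ}
    (hδ : 0 < δ) (t : ℝ) :
    HasDerivAt (horizontalPrimitive H δ) (H (t + δ * Complex.I)) t :=
  have hcont := continuous_comp_add_mul_I hd hδ
  intervalIntegral.integral_hasDerivAt_right (hcont.intervalIntegrable _ _)
    (hcont.stronglyMeasurableAtFilter _ _) hcont.continuousAt

lemma lipschitzWith_horizontalPrimitive (hd : DifferentiableOn ℂ H {z | 0 < z.im})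
    (hK : ∀ z : ℂ, 0 < z.im → ‖H z‖ ≤ K) {δ : ℝ} (hδ : 0 < δ) :
    LipschitzWith K (horizontalPrimitive H δ) :=
  lipschitzWith_of_nnnorm_deriv_le
    (fun t => (hasDerivAt_horizontalPrimitive hd hδ t).differentiableAt) fun t => by
      rw [(hasDerivAt_horizontalPrimitive hd hδ t).deriv]
      exact hK _ (by simpa using hδ)

lemma lipschitzOnWith_horizontalPrimitive_height (hd : DifferentiableOn ℂ H {z | 0 < z.im})
    (hK : ∀ z : ℂ, 0 < z.im → ‖H z‖ ≤ K) (t : ℝ) :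
    LipschitzOnWith (2 * K) (fun δ => horizontalPrimitive H δ t) (Ioi 0) := by
  refine LipschitzOnWith.of_dist_le_mul fun a ha b hb => ?_
  have hpos : ∀ y ∈ uIcc a b, 0 < y := fun y hy => (lt_min ha hb).trans_le hy.1
  have hvert : ∀ x : ℝ, ‖∫ y in a..b, H (x + y * Complex.I)‖ ≤ K * |b - a| := fun x =>
    intervalIntegral.norm_integral_le_of_norm_le_const fun y hy =>
      hK _ (by simpa using hpos y (uIoc_subset_uIcc hy))
  have hrect := Complex.integral_boundary_rect_eq_zero_of_differentiableOn H
    (a * Complex.I) (t + b * Complex.I) (hd.mono fun z hz => by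
      have hz_im := hz.2
      simp only [mem_preimage, Complex.mul_im, Complex.ofReal_re, Complex.I_im, Complex.ofReal_im,
        Complex.I_re, Complex.add_im, mul_one, mul_zero, add_zero, zero_add] at hz_im
      exact hpos _ hz_im)
  have hdiff : horizontalPrimitive H a t - horizontalPrimitive H b t
      = Complex.I * (∫ y in a..b, H ((0 : ℝ) + y * Complex.I))
        - Complex.I * ∫ y in a..b, H (t + y * Complex.I) := by
    simp only [Complex.mul_re, Complex.ofReal_re, Complex.I_re, mul_zero, Complex.ofReal_im,
      Complex.I_im, mul_one, sub_self, Complex.add_re, add_zero, Complex.mul_im, zero_add,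
      Complex.add_im, smul_eq_mul] at hrect
    unfold horizontalPrimitive
    linear_combination hrect
  calc dist (horizontalPrimitive H a t) (horizontalPrimitive H b t)
      ≤ K * |b - a| + K * |b - a| := by
        rw [dist_eq_norm, hdiff]
        refine (norm_sub_le _ _).trans ?_
        simp only [norm_mul, Complex.norm_I, one_mul]
        exact add_le_add (hvert 0) (hvert t)
    _ = (2 * K : ℝ≥0) * dist a b := by
        rw [dist_comm, Real.dist_eq]
        push_cast
        ring

lemma exists_lipschitzWith_tendsto_horizontalPrimitive
    (hd : DifferentiableOn ℂ H {z | 0 < z.im}) (hK : ∀ z : ℂ, 0 < z.im → ‖H z‖ ≤ K) :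
    ∃ ψ : ℝ → ℂ, LipschitzWith K ψ ∧
      ∀ t, Tendsto (fun δ => horizontalPrimitive H δ t) (𝓝[>] 0) (𝓝 (ψ t)) := by
  have hlim : ∀ t, ∃ L, Tendsto (fun δ => horizontalPrimitive H δ t) (𝓝[>] 0) (𝓝 L) := fun t => by
    obtain ⟨g, hg, hEq⟩ :=
      (lipschitzOnWith_horizontalPrimitive_height hd hK t).extend_finite_dimension
    exact ⟨g 0, ((hg.continuous.tendsto 0).mono_left nhdsWithin_le_nhds).congr'
      (hEq.eventuallyEq_nhdsWithin.symm)⟩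
  choose ψ hψ using hlim
  refine ⟨ψ, LipschitzWith.of_dist_le_mul fun a b => ?_, hψ⟩
  refine le_of_tendsto ((hψ a).dist (hψ b)) ?_
  filter_upwards [self_mem_nhdsWithin] with δ hδ
  exact (lipschitzWith_horizontalPrimitive hd hK hδ).dist_le_mul a b

lemma pi_mul_eq_integral_slope (hd : DifferentiableOn ℂ H {z | 0 < z.im})
    (hK : ∀ z : ℂ, 0 < z.im → ‖H z‖ ≤ K) {ψ : ℝ → ℂ}
    (hψ : ∀ t, Tendsto (fun δ => horizontalPrimitive H δ t) (𝓝[>] 0) (𝓝 (ψ t))) (t : ℝ) {ε : ℝ}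
    (hε : 0 < ε) :
    Real.pi * H (t + ε * Complex.I) = ∫ r, (ψ (t + ε * r) - ψ t) / ε * slopeKernel r := by
  have hleft : Tendsto (fun δ : ℝ => Real.pi * H (t + ε * Complex.I + δ * Complex.I)) (𝓝[>] 0)
      (𝓝 (Real.pi * H (t + ε * Complex.I))) := by
    have hcont : ContinuousAt H (t + ε * Complex.I) := hd.continuousOn.continuousAt
      ((isOpen_lt continuous_const Complex.continuous_im).mem_nhds (by simpa using hε))
    have harg : Tendsto (fun δ : ℝ => (t + ε * Complex.I + δ * Complex.I : ℂ)) (𝓝[>] 0)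
        (𝓝 (t + ε * Complex.I)) :=
      (Continuous.tendsto' (by fun_prop) _ _ (by simp)).mono_left nhdsWithin_le_nhds
    exact (hcont.tendsto.comp harg).const_mul _
  refine tendsto_nhds_unique (hleft.congr' ?_) (tendsto_integral_mul_slopeKernel K.coe_nonneg
    (q := fun δ r => (horizontalPrimitive H δ (t + ε * r) - horizontalPrimitive H δ t) / ε) ?_ ?_
    fun r => ((hψ _).sub (hψ _)).div_const _)
  · filter_upwards [self_mem_nhdsWithin] with δ hδ
    rw [mem_Ioi] at hδ
    have hpoisson := integral_mul_halfPlanePoisson (differentiableOn_comp_add_mul_I hd hδ) (M := K)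
      (fun z hz => hK _ (by linarith [im_add_mul_I z δ])) t hε
    rw [← hpoisson, integral_mul_halfPlanePoisson_eq_integral_slope
      (hasDerivAt_horizontalPrimitive hd hδ) (continuous_comp_add_mul_I hd hδ)
      (fun s => hK _ (by simpa using hδ)) t hε]
  · filter_upwards [self_mem_nhdsWithin] with δ hδ
    have := (lipschitzWith_horizontalPrimitive hd hK hδ).continuous
    fun_prop
  · filter_upwards [self_mem_nhdsWithin] with δ hδ r
    exact norm_sub_div_le_of_lipschitzWith (lipschitzWith_horizontalPrimitive hd hK hδ) t r hε

lemma ae_exists_tendsto_add_mul_I (hd : DifferentiableOn ℂ H {z | 0 < z.im})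
    (hK : ∀ z : ℂ, 0 < z.im → ‖H z‖ ≤ K) :
    ∀ᵐ t : ℝ, ∃ L, Tendsto (fun ε : ℝ => H (t + ε * Complex.I)) (𝓝[>] 0) (𝓝 L) := by
  obtain ⟨ψ, hψ_lip, hψ⟩ := exists_lipschitzWith_tendsto_horizontalPrimitive hd hK
  filter_upwards [hψ_lip.ae_differentiableAt_real] with t ht
  have hslope : ∀ r : ℝ,
      Tendsto (fun ε : ℝ => (ψ (t + ε * r) - ψ t) / ε) (𝓝[>] 0) (𝓝 (r • deriv ψ t)) := fun r => by
    have hinner : HasDerivAt (fun ε : ℝ => t + ε * r) r 0 := by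
      simpa using ((hasDerivAt_id (0 : ℝ)).mul_const r).const_add t
    have hcomp : HasDerivAt (fun ε : ℝ => ψ (t + ε * r)) (r • deriv ψ t) 0 :=
      HasDerivAt.scomp (0 : ℝ) (by simpa using ht.hasDerivAt) hinner
    refine hcomp.tendsto_slope_zero_right.congr fun ε => ?_
    rw [zero_add, zero_mul, add_zero, Complex.real_smul, Complex.ofReal_inv, inv_mul_eq_div]
  have hlim := tendsto_integral_mul_slopeKernel (l := 𝓝[>] 0) K.coe_nonneg
    (q := fun ε r => (ψ (t + ε * r) - ψ t) / ε)
    (Eventually.of_forall fun ε => by have := hψ_lip.continuous; fun_prop)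
    (by filter_upwards [self_mem_nhdsWithin] with ε hε r
        exact norm_sub_div_le_of_lipschitzWith hψ_lip t r hε) hslope
  refine ⟨_, (hlim.const_mul (Real.pi : ℂ)⁻¹).congr' ?_⟩
  filter_upwards [self_mem_nhdsWithin] with ε hε
  rw [← pi_mul_eq_integral_slope hd hK hψ t hε,
    inv_mul_cancel_left₀ (by exact_mod_cast Real.pi_ne_zero)]

end FatouTheorem

/-! ### The Cauchy transform and its logarithmic and exponential estimates -/

/-- The Cauchy transform `∫ u(x) / (x - z) dμ(x)` of the density `u`, without the factor
`(2πi)⁻¹`. -/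
def cauchyTransform (μ : Measure ℝ) (u : ℝ → ℂ) (z : ℂ) : ℂ := ∫ x, u x / (x - z) ∂μ

/-- The conjugate Poisson integral of `u` at height `ε`; a regularization of the principal value
integral of `u x / (x - t)`. -/
def conjPoisson (μ : Measure ℝ) (ε : ℝ) (u : ℝ → ℂ) (t : ℝ) : ℂ :=
  ∫ x, u x * halfPlaneConjPoisson ε (x - t) ∂μ

section CauchyTransform

variable {μ : Measure ℝ} {u : ℝ → ℂ}

lemma im_le_norm_ofReal_sub (x : ℝ) (z : ℂ) : z.im ≤ ‖(x : ℂ) - z‖ := by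
  simpa using (neg_le_abs _).trans (Complex.abs_im_le_norm ((x : ℂ) - z))

lemma norm_div_ofReal_sub_le (a : ℂ) (x : ℝ) {z : ℂ} {r : ℝ} (hr : 0 < r) (hz : r ≤ z.im) :
    ‖a / (x - z)‖ ≤ ‖a‖ / r := by
  rw [norm_div]
  gcongr
  exact hz.trans (im_le_norm_ofReal_sub x z)

lemma ofReal_sub_ne_zero (x : ℝ) {z : ℂ} (hz : 0 < z.im) : (x : ℂ) - z ≠ 0 :=
  norm_pos_iff.1 (hz.trans_le (im_le_norm_ofReal_sub x z))

lemma aestronglyMeasurable_div_ofReal_sub (hu : Integrable u μ) (z : ℂ) :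
    AEStronglyMeasurable (fun x : ℝ => u x / (x - z)) μ :=
  hu.aestronglyMeasurable.div₀ (by fun_prop)

lemma integrable_div_ofReal_sub (hu : Integrable u μ) {z : ℂ} (hz : 0 < z.im) :
    Integrable (fun x : ℝ => u x / (x - z)) μ :=
  (hu.norm.div_const z.im).mono' (aestronglyMeasurable_div_ofReal_sub hu z)
    (Eventually.of_forall fun x => norm_div_ofReal_sub_le _ x hz le_rfl)

lemma norm_cauchyTransform_le (hu : Integrable u μ) {z : ℂ} (hz : 0 < z.im) :
    ‖cauchyTransform μ u z‖ ≤ (∫ x, ‖u x‖ ∂μ) / z.im := by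
  unfold cauchyTransform
  rw [← integral_div]
  exact norm_integral_le_of_norm_le (hu.norm.div_const z.im)
    (Eventually.of_forall fun x => norm_div_ofReal_sub_le _ x hz le_rfl)

lemma differentiableOn_cauchyTransform (hu : Integrable u μ) :
    DifferentiableOn ℂ (cauchyTransform μ u) {z | 0 < z.im} := by
  intro z (hz : 0 < z.im)
  have hs : {w : ℂ | z.im / 2 < w.im} ∈ 𝓝 z :=
    (isOpen_lt continuous_const Complex.continuous_im).mem_nhds (half_lt_self hz)
  have hpos : ∀ w ∈ {w : ℂ | z.im / 2 < w.im}, 0 < w.im := fun w hw => (half_pos hz).trans hw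
  refine (hasDerivAt_integral_of_dominated_loc_of_deriv_le
    (F := fun w x => u x / ((x : ℂ) - w)) (F' := fun w x => u x / ((x : ℂ) - w) ^ 2)
    (bound := fun x => ‖u x‖ / (z.im / 2) ^ 2) hs
    (Eventually.of_forall fun w => aestronglyMeasurable_div_ofReal_sub hu w)
    (integrable_div_ofReal_sub hu hz) (hu.aestronglyMeasurable.div₀ (by fun_prop)) ?_
    (hu.norm.div_const _) ?_).2.differentiableAt.differentiableWithinAt
  · refine Eventually.of_forall fun x w (hw : z.im / 2 < w.im) => ?_
    rw [norm_div, norm_pow]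
    gcongr
    exact hw.le.trans (im_le_norm_ofReal_sub x w)
  · refine Eventually.of_forall fun x w hw => ?_
    have hinv := ((hasDerivAt_id w).const_sub (x : ℂ)).inv (ofReal_sub_ne_zero x (hpos w hw))
    simpa [div_eq_mul_inv] using hinv.const_mul (u x)

lemma continuous_cauchyTransform_add_mul_I (hu : Integrable u μ) {ε : ℝ} (hε : 0 < ε) :
    Continuous fun t : ℝ => cauchyTransform μ u (t + ε * Complex.I) :=
  continuous_comp_add_mul_I (differentiableOn_cauchyTransform hu) hε

lemma abs_halfPlaneConjPoisson_le {ε : ℝ} (hε : 0 < ε) (s : ℝ) :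
    |halfPlaneConjPoisson ε s| ≤ ε⁻¹ := by
  unfold halfPlaneConjPoisson
  rw [abs_div, abs_of_pos (by positivity : 0 < s ^ 2 + ε ^ 2), div_le_iff₀ (by positivity),
    inv_mul_eq_div, le_div_iff₀ hε, ← sq_abs s]
  nlinarith [sq_nonneg (|s| - ε), abs_nonneg s]

lemma continuous_halfPlaneConjPoisson {ε : ℝ} (hε : 0 < ε) :
    Continuous (halfPlaneConjPoisson ε) :=
  Continuous.div (by fun_prop) (by fun_prop) fun s => by positivity

lemma integrable_mul_halfPlaneConjPoisson (hu : Integrable u μ) {ε : ℝ} (hε : 0 < ε) (t : ℝ) :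
    Integrable (fun x => u x * (halfPlaneConjPoisson ε (x - t) : ℂ)) μ := by
  have hcont := continuous_halfPlaneConjPoisson hε
  refine hu.mul_bdd (c := ε⁻¹) (by fun_prop) (Eventually.of_forall fun x => ?_)
  rw [Complex.norm_real]
  exact abs_halfPlaneConjPoisson_le hε _

lemma norm_conjPoisson_le (hu : Integrable u μ) {ε : ℝ} (hε : 0 < ε) (t : ℝ) :
    ‖conjPoisson μ ε u t‖ ≤ (∫ x, ‖u x‖ ∂μ) * ε⁻¹ := by
  rw [conjPoisson, ← integral_mul_const]
  refine norm_integral_le_of_norm_le (hu.norm.mul_const _) (Eventually.of_forall fun x => ?_)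
  rw [norm_mul, Complex.norm_real]
  gcongr
  exact abs_halfPlaneConjPoisson_le hε _

lemma continuous_conjPoisson (hu : Integrable u μ) {ε : ℝ} (hε : 0 < ε) :
    Continuous (conjPoisson μ ε u) := by
  have hcont := continuous_halfPlaneConjPoisson hε
  refine continuous_of_dominated (bound := fun x => ‖u x‖ * ε⁻¹)
    (fun t => (integrable_mul_halfPlaneConjPoisson hu hε t).1)
    (fun t => Eventually.of_forall fun x => ?_) (hu.norm.mul_const _)
    (Eventually.of_forall fun x => by fun_prop)
  rw [norm_mul, Complex.norm_real]
  gcongr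
  exact abs_halfPlaneConjPoisson_le hε _

lemma integrable_mul_conjPoisson {f : ℝ → ℂ} {ν : Measure ℝ} (hf : Integrable f ν)
    (hu : Integrable u μ) {ε : ℝ} (hε : 0 < ε) :
    Integrable (fun t => f t * conjPoisson μ ε u t) ν :=
  hf.mul_bdd (continuous_conjPoisson hu hε).aestronglyMeasurable
    (Eventually.of_forall (norm_conjPoisson_le hu hε))

lemma conjPoisson_sub {v : ℝ → ℂ} (hu : Integrable u μ) (hv : Integrable v μ) {ε : ℝ} (hε : 0 < ε)
    (t : ℝ) :
    conjPoisson μ ε (fun x => u x - v x) t = conjPoisson μ ε u t - conjPoisson μ ε v t := by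
  simp only [conjPoisson, sub_mul]
  exact integral_sub (integrable_mul_halfPlaneConjPoisson hu hε t)
    (integrable_mul_halfPlaneConjPoisson hv hε t)

lemma conjPoisson_const_mul (c : ℂ) (ε t : ℝ) :
    conjPoisson μ ε (fun x => c * u x) t = c * conjPoisson μ ε u t := by
  simp only [conjPoisson, mul_assoc, integral_const_mul]

lemma conjPoisson_eq_sum_directionalPart (hu : Integrable u μ) {ε : ℝ} (hε : 0 < ε) (t : ℝ) :
    conjPoisson μ ε u t = ∑ k ∈ Finset.range 4,
      Complex.I ^ k * conjPoisson μ ε (fun x => directionalPart k (u x)) t := by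
  simp_rw [← conjPoisson_const_mul]
  unfold conjPoisson
  rw [← integral_finsetSum]
  · simp_rw [← Finset.sum_mul, sum_directionalPart]
  · exact fun k _ => integrable_mul_halfPlaneConjPoisson
      ((integrable_directionalPart hu k).ofReal.const_mul _) hε t

end CauchyTransform

section RealDensity

variable {μ : Measure ℝ} {u : ℝ → ℝ} {ε : ℝ}

lemma cauchyTransform_ofReal_add_mul_I (hu : Integrable u μ) (hε : 0 < ε) (t : ℝ) :
    cauchyTransform μ (fun x => u x) (t + ε * Complex.I)
      = (∫ x, u x * halfPlaneConjPoisson ε (x - t) ∂μ : ℝ)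
        + (∫ x, u x * halfPlanePoisson ε (x - t) ∂μ : ℝ) * Complex.I := by
  have hint := integrable_div_ofReal_sub hu.ofReal (z := t + ε * Complex.I) (by simpa using hε)
  have hkernel : ∀ x : ℝ, (u x : ℂ) / (x - (t + ε * Complex.I))
      = (u x * halfPlaneConjPoisson ε (x - t) : ℝ)
        + (u x * halfPlanePoisson ε (x - t) : ℝ) * Complex.I := fun x => by
    have h := inv_ofReal_sub_mul_I hε (x - t)
    push_cast at h ⊢
    rw [← sub_sub, div_eq_mul_inv, h]
    ring
  replace hint := hint.congr (Eventually.of_forall hkernel)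
  unfold cauchyTransform
  simp_rw [hkernel]
  rw [← integral_re_add_im hint]
  simp

lemma conjPoisson_ofReal (hu : Integrable u μ) (hε : 0 < ε) (t : ℝ) :
    conjPoisson μ ε (fun x => u x) t
      = (cauchyTransform μ (fun x => u x) (t + ε * Complex.I)).re := by
  rw [cauchyTransform_ofReal_add_mul_I hu hε]
  unfold conjPoisson
  simp_rw [← Complex.ofReal_mul, integral_complex_ofReal]
  simp

lemma cauchyTransform_ofReal_im (hu : Integrable u μ) {z : ℂ} (hz : 0 < z.im) :
    (cauchyTransform μ (fun x => u x) z).im = ∫ x, u x * halfPlanePoisson z.im (x - z.re) ∂μ := by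
  conv_lhs => rw [← Complex.re_add_im z, cauchyTransform_ofReal_add_mul_I hu hz]
  simp

lemma cauchyTransform_im_nonneg (hu : Integrable u μ) (h0 : ∀ x, 0 ≤ u x) {z : ℂ}
    (hz : 0 < z.im) : 0 ≤ (cauchyTransform μ (fun x => u x) z).im := by
  rw [cauchyTransform_ofReal_im hu hz]
  exact integral_nonneg fun x => mul_nonneg (h0 x) (halfPlanePoisson_nonneg hz.le _)

lemma abs_cauchyTransform_im_le (hμ : μ ≤ volume) (hu : Integrable u μ) {M : ℝ}
    (hM : ∀ x, |u x| ≤ M) {z : ℂ} (hz : 0 < z.im) :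
    |(cauchyTransform μ (fun x => u x) z).im| ≤ M * Real.pi := by
  have hkernel := (integrable_halfPlanePoisson_sub hz z.re).const_mul M
  have hM0 : 0 ≤ M := (abs_nonneg _).trans (hM 0)
  rw [cauchyTransform_ofReal_im hu hz, ← integral_halfPlanePoisson_sub hz z.re,
    ← integral_const_mul, ← Real.norm_eq_abs]
  refine (norm_integral_le_of_norm_le (hkernel.mono_measure hμ)
    (Eventually.of_forall fun x => ?_)).trans (integral_mono_measure hμ
      (Eventually.of_forall fun x => mul_nonneg hM0 (halfPlanePoisson_nonneg hz.le _)) hkernel)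
  rw [norm_mul, Real.norm_of_nonneg (halfPlanePoisson_nonneg hz.le _)]
  exact mul_le_mul_of_nonneg_right (hM x) (halfPlanePoisson_nonneg hz.le _)

lemma one_le_re_one_sub_I_mul_cauchyTransform (hu : Integrable u μ) (h0 : ∀ x, 0 ≤ u x) {z : ℂ}
    (hz : 0 < z.im) : 1 ≤ (1 - Complex.I * cauchyTransform μ (fun x => u x) z).re := by
  simpa using cauchyTransform_im_nonneg hu h0 hz

lemma one_le_norm_one_sub_I_mul_cauchyTransform (hu : Integrable u μ) (h0 : ∀ x, 0 ≤ u x) {z : ℂ}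
    (hz : 0 < z.im) : 1 ≤ ‖1 - Complex.I * cauchyTransform μ (fun x => u x) z‖ :=
  (one_le_re_one_sub_I_mul_cauchyTransform hu h0 hz).trans (Complex.re_le_norm _)

lemma log_norm_one_sub_I_mul_cauchyTransform_le (hu : Integrable u μ) (h0 : ∀ x, 0 ≤ u x) {z : ℂ}
    {r : ℝ} (hr : 0 < r) (hz : r ≤ z.im) :
    Real.log ‖1 - Complex.I * cauchyTransform μ (fun x => u x) z‖ ≤ (∫ x, u x ∂μ) / r := by
  have hz0 : 0 < z.im := hr.trans_le hz
  have hbound := norm_cauchyTransform_le hu.ofReal hz0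
  simp only [RCLike.norm_ofReal, abs_of_nonneg (h0 _)] at hbound
  have hnorm : ‖1 - Complex.I * cauchyTransform μ (fun x => u x) z‖ ≤ 1 + (∫ x, u x ∂μ) / r := by
    refine (norm_sub_le _ _).trans ?_
    rw [norm_one, norm_mul, Complex.norm_I, one_mul]
    gcongr
    exact hbound.trans (div_le_div_of_nonneg_left (integral_nonneg h0) hr hz)
  have hone := one_le_norm_one_sub_I_mul_cauchyTransform hu h0 hz0
  linarith [Real.log_le_sub_one_of_pos (zero_lt_one.trans_le hone)]

lemma lintegral_log_norm_one_sub_I_mul_cauchyTransform_le (hu : Integrable u μ)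
    (h0 : ∀ x, 0 ≤ u x) (hε : 0 < ε) :
    ∫⁻ t : ℝ, ENNReal.ofReal
        (Real.log ‖1 - Complex.I * cauchyTransform μ (fun x => u x) (t + ε * Complex.I)‖) ∂μI
      ≤ ENNReal.ofReal (2 * Real.pi * ∫ x, u x ∂μ) := by
  set G : ℂ → ℂ := fun z => Complex.log (1 - Complex.I * cauchyTransform μ (fun x => u x) z)
  have hGre : ∀ z,
      (G z).re = Real.log ‖1 - Complex.I * cauchyTransform μ (fun x => u x) z‖ :=
    fun z => Complex.log_re _
  have hre : ∀ z : ℂ, 0 < z.im → 0 ≤ (G z).re := fun z hz => by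
    rw [hGre]
    exact Real.log_nonneg (one_le_norm_one_sub_I_mul_cauchyTransform hu h0 hz)
  have hle : ∀ {r : ℝ} {z : ℂ}, 0 < r → r ≤ z.im → (G z).re ≤ (∫ x, u x ∂μ) / r :=
    fun hr hz => (hGre _).trans_le (log_norm_one_sub_I_mul_cauchyTransform_le hu h0 hr hz)
  have hd : DifferentiableOn ℂ G {z | 0 < z.im} :=
    (((differentiableOn_cauchyTransform hu.ofReal).const_mul _).const_sub _).clog fun z hz =>
      Or.inl (zero_lt_one.trans_le (one_le_re_one_sub_I_mul_cauchyTransform hu h0 hz))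
  simp_rw [← hGre]
  refine lintegral_re_add_mul_I_le hd hε (M := (∫ x, u x ∂μ) / ε + Real.pi) (fun z hz => ?_) hre
    fun z hz => by simpa using hle one_pos hz
  refine (Complex.norm_le_abs_re_add_abs_im _).trans (add_le_add ?_ ?_)
  · rw [abs_of_nonneg (hre z (hε.trans_le hz))]
    exact hle hε hz
  · rw [Complex.log_im]
    exact Complex.abs_arg_le_pi _

lemma exp_re_le_two_mul_re_exp {w : ℂ} (hw : |w.im| ≤ Real.pi / 3) :
    Real.exp w.re ≤ 2 * (Complex.exp w).re := by
  have hcos : 1 / 2 ≤ Real.cos w.im := by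
    rw [← Real.cos_pi_div_three, ← Real.cos_abs w.im]
    exact Real.cos_le_cos_of_nonneg_of_le_pi (abs_nonneg _) (by linarith [Real.pi_pos]) hw
  rw [Complex.exp_re]
  nlinarith [Real.exp_pos w.re]

lemma norm_exp_cauchyTransform_div_le {M : ℝ} (hM : 0 < M) (hu : Integrable u μI)
    (hb : ∀ x, |u x| ≤ M) {r : ℝ} {z : ℂ} (hr : 0 < r) (hz : r ≤ z.im) :
    ‖Complex.exp (cauchyTransform μI (fun x => u x) z / (4 * M : ℝ))‖ ≤ Real.exp (1 / r) := by
  have hmass : ∫ x, ‖(u x : ℂ)‖ ∂μI ≤ 2 * M := by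
    simp only [Complex.norm_real, Real.norm_eq_abs]
    refine (integral_mono hu.abs (integrable_const M) hb).trans_eq ?_
    simp [μI, measureReal_def]
    norm_num
  have hCT : (cauchyTransform μI (fun x => u x) z).re ≤ 2 * M / r :=
    (Complex.re_le_norm _).trans ((norm_cauchyTransform_le hu.ofReal
      (hr.trans_le hz)).trans (div_le_div₀ (by positivity) hmass hr hz))
  rw [le_div_iff₀ hr] at hCT
  rw [Complex.norm_exp, Real.exp_le_exp, Complex.div_ofReal_re,
    div_le_div_iff₀ (by positivity) hr]
  linarith

lemma lintegral_exp_cauchyTransform_re_le {M : ℝ} (hM : 0 < M) (hu : Integrable u μI)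
    (hb : ∀ x, |u x| ≤ M) (hε : 0 < ε) :
    ∫⁻ t : ℝ, ENNReal.ofReal (Real.exp
        ((cauchyTransform μI (fun x => u x) (t + ε * Complex.I)).re / (4 * M))) ∂μI
      ≤ ENNReal.ofReal (4 * Real.pi * Real.exp 1) := by
  set w : ℂ → ℂ := fun z => cauchyTransform μI (fun x => u x) z / (4 * M : ℝ) with hw
  have hw_re : ∀ z, (w z).re = (cauchyTransform μI (fun x => u x) z).re / (4 * M) :=
    fun z => Complex.div_ofReal_re _ _
  have hexp : ∀ z : ℂ, 0 < z.im → Real.exp (w z).re ≤ 2 * (Complex.exp (w z)).re := fun z hz => by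
    refine exp_re_le_two_mul_re_exp ?_
    rw [hw, Complex.div_ofReal_im, abs_div, abs_of_pos (by positivity : 0 < 4 * M),
      div_le_iff₀ (by positivity)]
    have hIm := abs_cauchyTransform_im_le μI_le_volume hu hb hz
    nlinarith [Real.pi_pos]
  have hnorm : ∀ {r : ℝ} {z : ℂ}, 0 < r → r ≤ z.im → ‖Complex.exp (w z)‖ ≤ Real.exp (1 / r) :=
    norm_exp_cauchyTransform_div_le hM hu hb
  have hd : DifferentiableOn ℂ (fun z => Complex.exp (w z)) {z | 0 < z.im} :=
    ((differentiableOn_cauchyTransform hu.ofReal).div_const _).cexp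
  have hre : ∀ z : ℂ, 0 < z.im → 0 ≤ (Complex.exp (w z)).re := fun z hz => by
    linarith [hexp z hz, Real.exp_pos (w z).re]
  calc _ ≤ ∫⁻ t : ℝ, 2 * ENNReal.ofReal (Complex.exp (w (t + ε * Complex.I))).re ∂μI := by
        refine lintegral_mono fun t => ?_
        rw [← ENNReal.ofReal_ofNat 2, ← ENNReal.ofReal_mul zero_le_two, ← hw_re]
        exact ENNReal.ofReal_le_ofReal (hexp _ (by simpa using hε))
    _ ≤ 2 * ENNReal.ofReal (2 * Real.pi * Real.exp 1) := by
        rw [lintegral_const_mul' _ _ (by simp)]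
        gcongr
        exact lintegral_re_add_mul_I_le hd hε (fun z => hnorm hε) hre fun z hz =>
          (Complex.re_le_norm _).trans (by simpa using hnorm one_pos hz)
    _ = ENNReal.ofReal (4 * Real.pi * Real.exp 1) := by
        rw [← ENNReal.ofReal_ofNat 2, ← ENNReal.ofReal_mul zero_le_two]
        congr 1
        ring

end RealDensity

/-! ### Almost everywhere boundary values -/

section LimitAtZero

variable {α : Type*} [MeasurableSpace α] {μ : Measure α}

lemma aemeasurable_of_ae_tendsto_nhdsGT {β : Type*} [TopologicalSpace β]
    [TopologicalSpace.PseudoMetrizableSpace β] [MeasurableSpace β] [BorelSpace β]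
    {F : ℝ → α → β} {G : α → β} (hF : ∀ ε, 0 < ε → AEMeasurable (F ε) μ)
    (hlim : ∀ᵐ t ∂μ, Tendsto (fun ε => F ε t) (𝓝[>] 0) (𝓝 (G t))) : AEMeasurable G μ := by
  obtain ⟨e, -, hpos, he⟩ := exists_seq_strictAnti_tendsto_nhdsWithin (0 : ℝ)
  exact aemeasurable_of_tendsto_metrizable_ae atTop (fun n => hF (e n) (hpos n))
    (hlim.mono fun t ht => ht.comp he)

lemma lintegral_le_of_ae_tendsto_nhdsGT {F : ℝ → α → ℝ≥0∞} {G : α → ℝ≥0∞} {C : ℝ≥0∞}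
    (hF : ∀ ε, 0 < ε → AEMeasurable (F ε) μ) (hC : ∀ ε, 0 < ε → ∫⁻ t, F ε t ∂μ ≤ C)
    (hlim : ∀ᵐ t ∂μ, Tendsto (fun ε => F ε t) (𝓝[>] 0) (𝓝 (G t))) : ∫⁻ t, G t ∂μ ≤ C := by
  obtain ⟨e, -, hpos, he⟩ := exists_seq_strictAnti_tendsto_nhdsWithin (0 : ℝ)
  calc ∫⁻ t, G t ∂μ = ∫⁻ t, liminf (fun n => F (e n) t) atTop ∂μ :=
        lintegral_congr_ae (hlim.mono fun t ht => (ht.comp he).liminf_eq.symm)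
    _ ≤ liminf (fun n => ∫⁻ t, F (e n) t ∂μ) atTop :=
        lintegral_liminf_le' fun n => hF (e n) (hpos n)
    _ ≤ liminf (fun _ : ℕ => C) atTop :=
        liminf_le_liminf (Eventually.of_forall fun n => hC (e n) (hpos n))
    _ = C := liminf_const C

end LimitAtZero

section BoundaryValues

variable {μ : Measure ℝ}

lemma one_sub_I_mul_cauchyTransform_ne_zero {u : ℝ → ℝ} (hu : Integrable u μ)
    (h0 : ∀ x, 0 ≤ u x) {z : ℂ} (hz : 0 < z.im) :
    1 - Complex.I * cauchyTransform μ (fun x => u x) z ≠ 0 :=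
  norm_pos_iff.1 (zero_lt_one.trans_le (one_le_norm_one_sub_I_mul_cauchyTransform hu h0 hz))

lemma ae_exists_tendsto_inv_one_sub_I_mul_cauchyTransform {u : ℝ → ℝ} (hu : Integrable u μ)
    (h0 : ∀ x, 0 ≤ u x) :
    ∀ᵐ t : ℝ, ∃ L, Tendsto
      (fun ε : ℝ => (1 - Complex.I * cauchyTransform μ (fun x => u x) (t + ε * Complex.I))⁻¹)
      (𝓝[>] 0) (𝓝 L) := by
  refine ae_exists_tendsto_add_mul_I (K := 1)
    (H := fun z => (1 - Complex.I * cauchyTransform μ (fun x => u x) z)⁻¹)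
    ((((differentiableOn_cauchyTransform hu.ofReal).const_mul _).const_sub _).inv fun z hz =>
      one_sub_I_mul_cauchyTransform_ne_zero hu h0 hz) fun z hz => ?_
  rw [norm_inv]
  exact inv_le_one_of_one_le₀ (one_le_norm_one_sub_I_mul_cauchyTransform hu h0 hz)

lemma aemeasurable_log_norm_one_sub_I_mul_cauchyTransform {u : ℝ → ℝ} (hu : Integrable u μ)
    {ε : ℝ} (hε : 0 < ε) :
    AEMeasurable (fun t : ℝ => ENNReal.ofReal (Real.log
      ‖1 - Complex.I * cauchyTransform μ (fun x => u x) (t + ε * Complex.I)‖)) μI :=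
  ((((continuous_cauchyTransform_add_mul_I hu.ofReal hε).measurable.const_mul
    Complex.I).const_sub 1).norm.log).ennreal_ofReal.aemeasurable

lemma tendsto_ofReal_log_norm_of_tendsto_inv {α : Type*} {l : Filter α} {f : α → ℂ} {L : ℂ}
    (hf : ∀ᶠ a in l, f a ≠ 0) (h : Tendsto (fun a => (f a)⁻¹) l (𝓝 L)) :
    Tendsto (fun a => ENNReal.ofReal (Real.log ‖f a‖)) l
      (𝓝 (if L = 0 then ⊤ else ENNReal.ofReal (Real.log ‖L⁻¹‖))) := by
  split_ifs with hL
  · subst hL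
    have hne : Tendsto (fun a => (f a)⁻¹) l (𝓝[≠] 0) :=
      tendsto_nhdsWithin_iff.2 ⟨h, hf.mono fun a ha => inv_ne_zero ha⟩
    refine ENNReal.tendsto_ofReal_atTop.comp (Real.tendsto_log_atTop.comp ?_)
    simpa only [Function.comp_def, inv_inv] using tendsto_norm_inv_nhdsNE_zero_atTop.comp hne
  · refine ENNReal.tendsto_ofReal ((Real.continuousAt_log ?_).tendsto.comp ?_)
    · simpa using hL
    · simpa only [inv_inv] using (h.inv₀ hL).norm

lemma ae_exists_tendsto_cauchyTransform {u : ℝ → ℝ} (hu : Integrable u μ) (h0 : ∀ x, 0 ≤ u x) :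
    ∀ᵐ t : ℝ ∂μI, ∃ L, Tendsto
      (fun ε : ℝ => cauchyTransform μ (fun x => u x) (t + ε * Complex.I)) (𝓝[>] 0) (𝓝 L) := by
  let D : ℝ → ℝ → ℂ :=
    fun t ε => 1 - Complex.I * cauchyTransform μ (fun x => u x) (t + ε * Complex.I)
  have hL : ∀ᵐ t ∂μI, Tendsto (fun ε => (D t ε)⁻¹) (𝓝[>] 0)
      (𝓝 (limUnder (𝓝[>] 0) fun ε => (D t ε)⁻¹)) :=
    (ae_restrict_of_ae (ae_exists_tendsto_inv_one_sub_I_mul_cauchyTransform hu h0)).mono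
      fun _ => tendsto_nhds_limUnder
  have hlog := hL.mono fun t ht => tendsto_ofReal_log_norm_of_tendsto_inv
    (eventually_mem_nhdsWithin.mono fun ε (hε : 0 < ε) =>
      one_sub_I_mul_cauchyTransform_ne_zero hu h0 (by simpa using hε)) ht
  have hmeas := fun ε => aemeasurable_log_norm_one_sub_I_mul_cauchyTransform hu (ε := ε)
  have hlintegral := lintegral_le_of_ae_tendsto_nhdsGT hmeas
    (fun ε => lintegral_log_norm_one_sub_I_mul_cauchyTransform_le hu h0) hlog
  have hfinite := ae_lt_top' (aemeasurable_of_ae_tendsto_nhdsGT hmeas hlog)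
    (hlintegral.trans_lt ENNReal.ofReal_lt_top).ne
  filter_upwards [hL, hfinite] with t ht hlt
  have hLt := fun h => hlt.ne (if_pos h)
  refine ⟨Complex.I * (_⁻¹ - 1), (((ht.inv₀ hLt).sub_const 1).const_mul Complex.I).congr
    fun ε => ?_⟩
  rw [inv_inv, sub_sub_cancel_left, mul_neg, ← mul_assoc, Complex.I_mul_I, neg_one_mul, neg_neg]

lemma ae_exists_tendsto_conjPoisson_of_nonneg {u : ℝ → ℝ} (hu : Integrable u μ)
    (h0 : ∀ x, 0 ≤ u x) :
    ∀ᵐ t : ℝ ∂μI, ∃ L, Tendsto (fun ε => conjPoisson μ ε (fun x => u x) t) (𝓝[>] 0) (𝓝 L) := by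
  filter_upwards [ae_exists_tendsto_cauchyTransform hu h0] with t ⟨L, hL⟩
  refine ⟨(L.re : ℂ), (((Complex.continuous_ofReal.comp Complex.continuous_re).tendsto L).comp
    hL).congr' ?_⟩
  filter_upwards [self_mem_nhdsWithin] with ε hε using (conjPoisson_ofReal hu hε t).symm

lemma ae_exists_tendsto_conjPoisson {u : ℝ → ℂ} (hu : Integrable u μ) :
    ∀ᵐ t : ℝ ∂μI, ∃ L, Tendsto (fun ε => conjPoisson μ ε u t) (𝓝[>] 0) (𝓝 L) := by
  have hparts := ae_all_iff.2 fun k => ae_exists_tendsto_conjPoisson_of_nonneg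
    (integrable_directionalPart hu k) fun x => directionalPart_nonneg k (u x)
  filter_upwards [hparts] with t ht
  choose L hL using ht
  refine ⟨∑ k ∈ Finset.range 4, Complex.I ^ k * L k,
    (tendsto_finsetSum _ fun k _ => (hL k).const_mul _).congr' ?_⟩
  filter_upwards [self_mem_nhdsWithin] with ε hε
    using (conjPoisson_eq_sum_directionalPart hu hε t).symm

end BoundaryValues

/-! ### The principal value as a limit of conjugate Poisson integrals -/

section LebesguePoints

lemma exists_halfPlanePoisson_le {ε : ℝ} (hε : 0 < ε) (s : ℝ) :
    ∃ k : ℕ, |s| ≤ 2 ^ k * ε ∧ halfPlanePoisson ε s ≤ 4 * (1 / 4) ^ k * ε⁻¹ := by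
  classical
  have hex : ∃ k : ℕ, |s| ≤ 2 ^ k * ε := by
    obtain ⟨k, hk⟩ := pow_unbounded_of_one_lt (|s| / ε) one_lt_two
    exact ⟨k, ((div_lt_iff₀ hε).1 hk).le⟩
  refine ⟨Nat.find hex, Nat.find_spec hex, ?_⟩
  have hquarter : ∀ k : ℕ, (1 / 4 : ℝ) ^ k * (2 ^ k) ^ 2 = 1 := fun k => by
    rw [pow_right_comm, ← mul_pow]
    norm_num
  unfold halfPlanePoisson
  rw [div_le_iff₀ (by positivity)]
  rcases hk : Nat.find hex with _ | k
  · field_simp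
    nlinarith [sq_nonneg s]
  · have hs : (2 ^ k * ε) ^ 2 ≤ s ^ 2 := by
      rw [← sq_abs s]
      gcongr
      exact (not_le.1 (Nat.find_min hex (hk ▸ k.lt_succ_self))).le
    calc ε = 4 * (1 / 4) ^ (k + 1) * ε⁻¹ * (2 ^ k * ε) ^ 2 := by
          field_simp
          linear_combination -hquarter k
      _ ≤ 4 * (1 / 4) ^ (k + 1) * ε⁻¹ * (s ^ 2 + ε ^ 2) := by
          gcongr
          linarith [sq_nonneg ε]

lemma lintegral_halfPlanePoisson_mul_le {V : ℝ → ℝ≥0∞} (hV : AEMeasurable V) {ε : ℝ} (hε : 0 < ε)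
    (t : ℝ) :
    ∫⁻ x, ENNReal.ofReal (halfPlanePoisson ε (x - t)) * V x
      ≤ ∑' k : ℕ, ENNReal.ofReal (4 * (1 / 4) ^ k * ε⁻¹)
          * ∫⁻ x in Metric.closedBall t (2 ^ k * ε), V x := by
  simp_rw [← lintegral_const_mul' _ _ ENNReal.ofReal_ne_top,
    ← lintegral_indicator Metric.isClosed_closedBall.measurableSet]
  rw [← lintegral_tsum fun k =>
    (hV.const_mul _).indicator Metric.isClosed_closedBall.measurableSet]
  refine lintegral_mono fun x => ?_
  obtain ⟨k, hk, hle⟩ := exists_halfPlanePoisson_le hε (x - t)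
  refine le_trans ?_ (ENNReal.le_tsum k)
  rw [indicator_of_mem (by simpa [Real.dist_eq] using hk)]
  gcongr

lemma tendsto_tsum_geometric_mul {m : ℝ → ℝ} {C : ℝ} (h0 : ∀ r, 0 < r → 0 ≤ m r)
    (hC : ∀ r, 0 < r → m r ≤ C) (hlim : Tendsto m (𝓝[>] 0) (𝓝 0)) :
    Tendsto (fun ε => ∑' k : ℕ, 4 * (1 / 2) ^ k * m (2 ^ k * ε)) (𝓝[>] 0) (𝓝 0) := by
  have hscale : ∀ k : ℕ, Tendsto (fun ε : ℝ => 2 ^ k * ε) (𝓝[>] 0) (𝓝[>] 0) := fun k => by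
    refine tendsto_nhdsWithin_iff.2 ⟨?_, eventually_mem_nhdsWithin.mono fun ε (hε : 0 < ε) => ?_⟩
    · simpa using ((continuous_const_mul ((2 : ℝ) ^ k)).tendsto 0).mono_left nhdsWithin_le_nhds
    · exact mul_pos (by positivity) hε
  have hterm : ∀ k : ℕ, Tendsto (fun ε => 4 * (1 / 2) ^ k * m (2 ^ k * ε)) (𝓝[>] 0) (𝓝 0) :=
    fun k => by
      simpa only [mul_zero, Function.comp_apply] using
        (hlim.comp (hscale k)).const_mul (4 * (1 / 2) ^ k)
  have hsum : Summable fun k : ℕ => 4 * (1 / 2 : ℝ) ^ k * C :=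
    (summable_geometric_two.mul_left 4).mul_right C
  simpa using tendsto_tsum_of_dominated_convergence hsum hterm
    (eventually_mem_nhdsWithin.mono fun ε (hε : 0 < ε) k => by
      have hr : 0 < 2 ^ k * ε := by positivity
      rw [Real.norm_of_nonneg (mul_nonneg (by positivity) (h0 _ hr))]
      gcongr
      exact hC _ hr)

lemma tendsto_lintegral_halfPlanePoisson_mul {V : ℝ → ℝ} {t C : ℝ} (hV : LocallyIntegrable V)
    (h0 : ∀ x, 0 ≤ V x) (hC : ∀ r, 0 < r → (∫ x in Metric.closedBall t r, V x) / r ≤ C)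
    (hlim : Tendsto (fun r => (∫ x in Metric.closedBall t r, V x) / r) (𝓝[>] 0) (𝓝 0)) :
    Tendsto (fun ε => ∫⁻ x, ENNReal.ofReal (halfPlanePoisson ε (x - t)) * ENNReal.ofReal (V x))
      (𝓝[>] 0) (𝓝 0) := by
  set m : ℝ → ℝ := fun r => (∫ x in Metric.closedBall t r, V x) / r with hm
  have hm0 : ∀ r, 0 < r → 0 ≤ m r := fun r hr => div_nonneg (integral_nonneg h0) hr.le
  have htsum := ENNReal.tendsto_ofReal (tendsto_tsum_geometric_mul hm0 hC hlim)
  rw [ENNReal.ofReal_zero] at htsum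
  refine tendsto_of_tendsto_of_tendsto_of_le_of_le' tendsto_const_nhds htsum
    (Eventually.of_forall fun _ => zero_le) ?_
  filter_upwards [self_mem_nhdsWithin] with ε (hε : 0 < ε)
  have hnonneg : ∀ k : ℕ, 0 ≤ 4 * (1 / 2) ^ k * m (2 ^ k * ε) := fun k =>
    mul_nonneg (by positivity) (hm0 _ (by positivity))
  have hsum : Summable fun k : ℕ => 4 * (1 / 2) ^ k * m (2 ^ k * ε) :=
    ((summable_geometric_two.mul_left 4).mul_right C).of_nonneg_of_le hnonneg fun k =>
      mul_le_mul_of_nonneg_left (hC _ (by positivity)) (by positivity)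
  refine (lintegral_halfPlanePoisson_mul_le hV.aestronglyMeasurable.aemeasurable.ennreal_ofReal hε
    t).trans_eq ?_
  rw [ENNReal.ofReal_tsum_of_nonneg hnonneg hsum]
  refine tsum_congr fun k => ?_
  rw [← ofReal_integral_eq_lintegral_ofReal (hV.integrableOn_isCompact
    (isCompact_closedBall _ _)) (Eventually.of_forall h0), ← ENNReal.ofReal_mul (by positivity)]
  have hquarter : (1 / 4 : ℝ) ^ k = (1 / 2) ^ k * (2 ^ k)⁻¹ := by
    rw [← inv_pow, ← mul_pow]
    norm_num
  simp only [hm, hquarter]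
  congr 1
  field_simp

variable {U : ℝ → ℂ}

lemma ae_tendsto_setIntegral_norm_sub_div (hU : LocallyIntegrable U) :
    ∀ᵐ t, Tendsto (fun r => (∫ x in Metric.closedBall t r, ‖U x - U t‖) / r) (𝓝[>] 0) (𝓝 0) := by
  filter_upwards [IsUnifLocDoublingMeasure.ae_tendsto_average_norm_sub volume hU 1] with t ht
  have havg := (ht (l := 𝓝[>] 0) (fun _ => t) id tendsto_id (eventually_mem_nhdsWithin.mono
    fun r (hr : 0 < r) => Metric.mem_closedBall_self (by simpa using hr.le))).const_mul 2
  rw [mul_zero] at havg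
  refine havg.congr' (eventually_mem_nhdsWithin.mono fun r (hr : 0 < r) => ?_)
  rw [id, setAverage_eq, Real.volume_real_closedBall hr.le, smul_eq_mul]
  field_simp

lemma exists_setIntegral_norm_sub_div_le (hU : Integrable U) {c : ℂ} {t : ℝ}
    (hlim : Tendsto (fun r => (∫ x in Metric.closedBall t r, ‖U x - c‖) / r) (𝓝[>] 0) (𝓝 0)) :
    ∃ C, ∀ r, 0 < r → (∫ x in Metric.closedBall t r, ‖U x - c‖) / r ≤ C := by
  obtain ⟨r₀, hr₀ : 0 < r₀, hsmall⟩ :=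
    mem_nhdsGT_iff_exists_Ioo_subset.1 (hlim.eventually_le_const zero_lt_one)
  refine ⟨max 1 ((∫ x, ‖U x‖) / r₀ + 2 * ‖c‖), fun r hr => ?_⟩
  rcases lt_or_ge r r₀ with hlt | hge
  · exact le_max_of_le_left (hsmall ⟨hr, hlt⟩)
  refine le_max_of_le_right ?_
  have hconst : IntegrableOn (fun _ => c) (Metric.closedBall t r) :=
    integrableOn_const measure_closedBall_lt_top.ne
  have hle : ∫ x in Metric.closedBall t r, ‖U x - c‖ ≤ (∫ x, ‖U x‖) + 2 * r * ‖c‖ := by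
    calc ∫ x in Metric.closedBall t r, ‖U x - c‖
        ≤ ∫ x in Metric.closedBall t r, (‖U x‖ + ‖c‖) :=
          integral_mono (hU.integrableOn.sub hconst).norm (hU.norm.integrableOn.add hconst.norm)
            fun x => norm_sub_le _ _
      _ = (∫ x in Metric.closedBall t r, ‖U x‖) + 2 * r * ‖c‖ := by
          rw [integral_add hU.norm.integrableOn hconst.norm, setIntegral_const,
            Real.volume_real_closedBall hr.le, smul_eq_mul]
      _ ≤ (∫ x, ‖U x‖) + 2 * r * ‖c‖ := by
          exact add_le_add_left (setIntegral_le_integral hU.norm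
            (Eventually.of_forall fun _ => norm_nonneg _)) _
  calc (∫ x in Metric.closedBall t r, ‖U x - c‖) / r ≤ ((∫ x, ‖U x‖) + 2 * r * ‖c‖) / r := by gcongr
    _ = (∫ x, ‖U x‖) / r + 2 * ‖c‖ := by field_simp
    _ ≤ (∫ x, ‖U x‖) / r₀ + 2 * ‖c‖ := by
        gcongr

lemma ae_tendsto_lintegral_halfPlanePoisson_mul_norm_sub (hU : Integrable U) :
    ∀ᵐ t, Tendsto (fun ε => ∫⁻ x, ENNReal.ofReal (halfPlanePoisson ε (x - t))
      * ENNReal.ofReal ‖U x - U t‖) (𝓝[>] 0) (𝓝 0) := by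
  filter_upwards [ae_tendsto_setIntegral_norm_sub_div hU.locallyIntegrable] with t ht
  obtain ⟨C, hC⟩ := exists_setIntegral_norm_sub_div_le hU ht
  have hsub := hU.locallyIntegrable.sub (locallyIntegrable_const (U t))
  exact tendsto_lintegral_halfPlanePoisson_mul (fun x => (hsub x).norm) (fun _ => norm_nonneg _)
    hC ht

end LebesguePoints

/-- The truncation of the Hilbert kernel `s⁻¹` to `|s| ≥ ε`. -/
def truncatedInv (ε s : ℝ) : ℝ := {s : ℝ | ε ≤ |s|}.indicator (fun s => s⁻¹) s

section KernelComparison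

variable {ε : ℝ}

lemma truncatedInv_of_le {s : ℝ} (h : ε ≤ |s|) : truncatedInv ε s = s⁻¹ :=
  indicator_of_mem (s := {s : ℝ | ε ≤ |s|}) h _

lemma truncatedInv_of_lt {s : ℝ} (h : |s| < ε) : truncatedInv ε s = 0 :=
  indicator_of_notMem (s := {s : ℝ | ε ≤ |s|}) h.not_ge _

lemma measurable_truncatedInv (ε : ℝ) : Measurable (truncatedInv ε) :=
  measurable_inv.indicator (measurableSet_le measurable_const measurable_norm)

lemma truncatedInv_neg (ε s : ℝ) : truncatedInv ε (-s) = -truncatedInv ε s := by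
  rcases le_or_gt ε |s| with h | h
  · rw [truncatedInv_of_le h, truncatedInv_of_le (by rwa [abs_neg]), inv_neg]
  · rw [truncatedInv_of_lt h, truncatedInv_of_lt (by rwa [abs_neg]), neg_zero]

lemma halfPlaneConjPoisson_neg (ε s : ℝ) :
    halfPlaneConjPoisson ε (-s) = -halfPlaneConjPoisson ε s := by
  unfold halfPlaneConjPoisson
  rw [neg_sq, neg_div]

lemma abs_truncatedInv_le (hε : 0 < ε) (s : ℝ) : |truncatedInv ε s| ≤ ε⁻¹ := by
  rcases le_or_gt ε |s| with h | h
  · rw [truncatedInv_of_le h, abs_inv]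
    gcongr
  · rw [truncatedInv_of_lt h, abs_zero]
    positivity

lemma abs_halfPlaneConjPoisson_sub_truncatedInv_le (hε : 0 < ε) (s : ℝ) :
    |halfPlaneConjPoisson ε s - truncatedInv ε s| ≤ halfPlanePoisson ε s := by
  have hpos : 0 < s ^ 2 + ε ^ 2 := by positivity
  unfold halfPlaneConjPoisson halfPlanePoisson
  rcases le_or_gt ε |s| with h | h
  · have hs : 0 < |s| := hε.trans_le h
    have hs0 : s ≠ 0 := abs_pos.1 hs
    have hdiff : s / (s ^ 2 + ε ^ 2) - s⁻¹ = -(ε ^ 2 / s) / (s ^ 2 + ε ^ 2) := by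
      field_simp
      ring
    rw [truncatedInv_of_le h, hdiff, abs_div, abs_neg, abs_div, abs_of_pos hpos, abs_sq]
    gcongr
    rw [div_le_iff₀ hs, sq]
    gcongr
  · rw [truncatedInv_of_lt h, sub_zero, abs_div, abs_of_pos hpos]
    gcongr

lemma integrable_halfPlaneConjPoisson_sub_truncatedInv (hε : 0 < ε) (t : ℝ) :
    Integrable fun x => ((halfPlaneConjPoisson ε (x - t) - truncatedInv ε (x - t) : ℝ) : ℂ) := by
  have hmeas : Measurable fun s => halfPlaneConjPoisson ε s - truncatedInv ε s :=
    (continuous_halfPlaneConjPoisson hε).measurable.sub (measurable_truncatedInv ε)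
  exact ((integrable_halfPlanePoisson_sub hε t).mono'
    (hmeas.comp (measurable_sub_const t)).aestronglyMeasurable (Eventually.of_forall fun x =>
      abs_halfPlaneConjPoisson_sub_truncatedInv_le hε _)).ofReal

lemma integral_halfPlaneConjPoisson_sub_truncatedInv (ε t : ℝ) :
    ∫ x, ((halfPlaneConjPoisson ε (x - t) - truncatedInv ε (x - t) : ℝ) : ℂ) = 0 := by
  rw [integral_complex_ofReal, integral_sub_right_eq_self
    (fun s => halfPlaneConjPoisson ε s - truncatedInv ε s) t]
  have hodd := integral_neg_eq_self
    (fun s => halfPlaneConjPoisson ε s - truncatedInv ε s) volume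
  simp only [halfPlaneConjPoisson_neg, truncatedInv_neg, ← neg_sub', integral_neg] at hodd
  rw [self_eq_neg.1 hodd.symm, Complex.ofReal_zero]

variable {u : ℝ → ℂ}

lemma integrable_mul_truncatedInv {μ : Measure ℝ} (hu : Integrable u μ) (hε : 0 < ε) (t : ℝ) :
    Integrable (fun x => u x * (truncatedInv ε (x - t) : ℂ)) μ := by
  have hmeas := Complex.measurable_ofReal.comp
    ((measurable_truncatedInv ε).comp (measurable_sub_const t))
  refine hu.mul_bdd (c := ε⁻¹) hmeas.aestronglyMeasurable (Eventually.of_forall fun x => ?_)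
  rw [Complex.norm_real]
  exact abs_truncatedInv_le hε _

lemma setIntegral_div_sub_eq_integral_mul_truncatedInv (u : ℝ → ℂ) (ε t : ℝ) :
    ∫ x in {x : ℝ | x ∈ Ioo (-1 : ℝ) 1 ∧ ε ≤ |x - t|}, u x / ((x : ℂ) - t)
      = ∫ x, u x * (truncatedInv ε (x - t) : ℂ) ∂μI := by
  have hfar : MeasurableSet {x : ℝ | ε ≤ |x - t|} := measurableSet_le measurable_const (by fun_prop)
  have hset : {x : ℝ | x ∈ Ioo (-1 : ℝ) 1 ∧ ε ≤ |x - t|} = {x | ε ≤ |x - t|} ∩ Ioo (-1) 1 :=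
    inter_comm _ _
  rw [hset, ← Measure.restrict_restrict hfar, ← integral_indicator hfar]
  refine integral_congr_ae (Eventually.of_forall fun x => ?_)
  rcases le_or_gt ε |x - t| with h | h
  · simp [truncatedInv_of_le h, indicator_of_mem (s := {x : ℝ | ε ≤ |x - t|}) h, div_eq_mul_inv]
  · simp [truncatedInv_of_lt h, indicator_of_notMem (s := {x : ℝ | ε ≤ |x - t|}) h.not_ge]

/-- The difference of the two kernels has mean zero, so a constant may be subtracted from `u`. -/
lemma conjPoisson_sub_integral_mul_truncatedInv (hu : Integrable u μI) (hε : 0 < ε) (t : ℝ)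
    (c : ℂ) :
    conjPoisson μI ε u t - ∫ x, u x * (truncatedInv ε (x - t) : ℂ) ∂μI
      = ∫ x, ((Ioo (-1) 1).indicator u x - c)
          * ((halfPlaneConjPoisson ε (x - t) - truncatedInv ε (x - t) : ℝ) : ℂ) := by
  set κ : ℝ → ℂ := fun x => (halfPlaneConjPoisson ε (x - t) - truncatedInv ε (x - t) : ℝ) with hκ
  have hker : Integrable κ := integrable_halfPlaneConjPoisson_sub_truncatedInv hε t
  have hconj := integrable_mul_halfPlaneConjPoisson hu hε t
  have htrunc := integrable_mul_truncatedInv hu hε t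
  have hsplit : ∀ x, u x * κ x
      = u x * (halfPlaneConjPoisson ε (x - t) : ℂ) - u x * (truncatedInv ε (x - t) : ℂ) :=
    fun x => by simp only [hκ, Complex.ofReal_sub, mul_sub]
  have hind : (fun x => (Ioo (-1) 1).indicator u x * κ x)
      = (Ioo (-1) 1).indicator fun x => u x * κ x :=
    funext fun x => (indicator_mul_left (Ioo (-1) 1) u κ).symm
  have hint : Integrable fun x => (Ioo (-1) 1).indicator u x * κ x := by
    rw [hind, integrable_indicator_iff measurableSet_Ioo]
    exact (hconj.sub htrunc).congr (Eventually.of_forall fun x => (hsplit x).symm)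
  calc conjPoisson μI ε u t - ∫ x, u x * (truncatedInv ε (x - t) : ℂ) ∂μI
      = ∫ x, u x * κ x ∂μI := by
        simp_rw [hsplit]
        exact (integral_sub hconj htrunc).symm
    _ = ∫ x, (Ioo (-1) 1).indicator u x * κ x := by
        rw [hind, integral_indicator measurableSet_Ioo, μI]
    _ = ∫ x, ((Ioo (-1) 1).indicator u x - c) * κ x := by
        simp_rw [sub_mul]
        rw [integral_sub hint (hker.const_mul c), integral_const_mul,
          integral_halfPlaneConjPoisson_sub_truncatedInv, mul_zero, sub_zero]

lemma ae_tendsto_conjPoisson_sub_integral_mul_truncatedInv (hu : Integrable u μI) :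
    ∀ᵐ t ∂μI, Tendsto
      (fun ε => conjPoisson μI ε u t - ∫ x, u x * (truncatedInv ε (x - t) : ℂ) ∂μI)
      (𝓝[>] 0) (𝓝 0) := by
  have hU : Integrable ((Ioo (-1) 1).indicator u) :=
    (integrable_indicator_iff measurableSet_Ioo).2 hu
  have hpoint := ae_restrict_of_ae (s := Ioo (-1) 1)
    (ae_tendsto_lintegral_halfPlanePoisson_mul_norm_sub hU)
  filter_upwards [hpoint] with t ht
  rw [tendsto_zero_iff_enorm_tendsto_zero]
  refine tendsto_of_tendsto_of_tendsto_of_le_of_le' tendsto_const_nhds ht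
    (Eventually.of_forall fun _ => zero_le) ?_
  filter_upwards [self_mem_nhdsWithin] with ε hε
  rw [conjPoisson_sub_integral_mul_truncatedInv hu hε t ((Ioo (-1) 1).indicator u t)]
  refine (enorm_integral_le_lintegral_enorm _).trans (lintegral_mono fun x => ?_)
  rw [enorm_mul, mul_comm, ← ofReal_norm, ← ofReal_norm, Complex.norm_real]
  gcongr
  exact abs_halfPlaneConjPoisson_sub_truncatedInv_le hε _

theorem ae_tendsto_conjPoisson_pi_mul_FHT (hu : Integrable u μI) :
    ∀ᵐ t ∂μI, Tendsto (fun ε => conjPoisson μI ε u t) (𝓝[>] 0) (𝓝 (Real.pi * FHT u t)) := by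
  filter_upwards [ae_exists_tendsto_conjPoisson hu,
    ae_tendsto_conjPoisson_sub_integral_mul_truncatedInv hu] with t ⟨L, hL⟩ ht
  have htrunc := hL.sub ht
  simp only [sub_sub_cancel, sub_zero, ← setIntegral_div_sub_eq_integral_mul_truncatedInv] at htrunc
  have hFHT : FHT u t = (Real.pi : ℂ)⁻¹ * L := (htrunc.const_mul _).limUnder_eq
  rwa [hFHT, mul_inv_cancel_left₀ (Complex.ofReal_ne_zero.2 Real.pi_ne_zero)]

end KernelComparison

/-! ### Almost everywhere properties of the finite Hilbert transform -/

section FiniteHilbertTransform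

variable {u v : ℝ → ℂ}

lemma pi_mul_cancel {a b : ℂ} (h : Real.pi * a = Real.pi * b) : a = b :=
  mul_left_cancel₀ (Complex.ofReal_ne_zero.2 Real.pi_ne_zero) h

lemma aestronglyMeasurable_FHT (hu : Integrable u μI) : AEStronglyMeasurable (FHT u) μI := by
  have hpi := aemeasurable_of_ae_tendsto_nhdsGT
    (fun ε hε => (continuous_conjPoisson hu hε).aemeasurable) (ae_tendsto_conjPoisson_pi_mul_FHT hu)
  simpa only [inv_mul_cancel_left₀ (Complex.ofReal_ne_zero.2 Real.pi_ne_zero)]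
    using (hpi.const_mul (Real.pi : ℂ)⁻¹).aestronglyMeasurable

lemma FHT_sub_ae_eq (hu : Integrable u μI) (hv : Integrable v μI) :
    FHT (fun x => u x - v x) =ᵐ[μI] fun t => FHT u t - FHT v t := by
  filter_upwards [ae_tendsto_conjPoisson_pi_mul_FHT hu, ae_tendsto_conjPoisson_pi_mul_FHT hv,
    ae_tendsto_conjPoisson_pi_mul_FHT (hu.sub hv)] with t hut hvt hsub
  apply pi_mul_cancel
  rw [mul_sub]
  refine tendsto_nhds_unique hsub ((hut.sub hvt).congr' ?_)
  filter_upwards [self_mem_nhdsWithin] with ε hε using (conjPoisson_sub hu hv hε t).symm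

lemma FHT_ae_eq_sum_directionalPart (hu : Integrable u μI) :
    FHT u =ᵐ[μI] fun t => ∑ k ∈ Finset.range 4,
      Complex.I ^ k * FHT (fun x => directionalPart k (u x)) t := by
  have hparts := ae_all_iff.2 fun k =>
    ae_tendsto_conjPoisson_pi_mul_FHT (integrable_directionalPart hu k).ofReal
  filter_upwards [ae_tendsto_conjPoisson_pi_mul_FHT hu, hparts] with t hut hpt
  apply pi_mul_cancel
  simp_rw [Finset.mul_sum, mul_left_comm (Real.pi : ℂ)]
  refine tendsto_nhds_unique hut
    ((tendsto_finsetSum _ fun k _ => (hpt k).const_mul (Complex.I ^ k)).congr' ?_)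
  filter_upwards [self_mem_nhdsWithin] with ε hε
    using (conjPoisson_eq_sum_directionalPart hu hε t).symm

lemma log_one_add_norm_conjPoisson_sq_le {μ : Measure ℝ} {u : ℝ → ℝ} (hu : Integrable u μ)
    (h0 : ∀ x, 0 ≤ u x) {ε : ℝ} (hε : 0 < ε) (t : ℝ) :
    Real.log (1 + ‖conjPoisson μ ε (fun x => u x) t‖ ^ 2) / 2
      ≤ Real.log ‖1 - Complex.I * cauchyTransform μ (fun x => u x) (t + ε * Complex.I)‖ := by
  set F := cauchyTransform μ (fun x => u x) (t + ε * Complex.I) with hF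
  have hF_im : 0 ≤ F.im := cauchyTransform_im_nonneg hu h0 (by simpa using hε)
  have hle : 1 + F.re ^ 2 ≤ Complex.normSq (1 - Complex.I * F) := by
    have hre : (1 - Complex.I * F).re = 1 + F.im := by simp
    have him : (1 - Complex.I * F).im = -F.re := by simp
    rw [Complex.normSq_apply, hre, him]
    nlinarith
  rw [conjPoisson_ofReal hu hε, ← hF, Complex.norm_real, Real.norm_eq_abs, sq_abs,
    Complex.norm_def, Real.log_sqrt (Complex.normSq_nonneg _)]
  gcongr

lemma lintegral_log_one_add_norm_FHT_sq_le {u : ℝ → ℝ} (hu : Integrable u μI)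
    (h0 : ∀ x, 0 ≤ u x) :
    ∫⁻ t, ENNReal.ofReal (Real.log (1 + ‖Real.pi * FHT (fun x => u x) t‖ ^ 2) / 2) ∂μI
      ≤ ENNReal.ofReal (2 * Real.pi * ∫ x, u x ∂μI) := by
  have hcont : Continuous fun z : ℂ => ENNReal.ofReal (Real.log (1 + ‖z‖ ^ 2) / 2) :=
    ENNReal.continuous_ofReal.comp
      ((Continuous.log (by fun_prop) fun z => by positivity).div_const 2)
  refine lintegral_le_of_ae_tendsto_nhdsGT
    (fun ε hε => (hcont.comp (continuous_conjPoisson hu.ofReal hε)).aemeasurable)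
    (fun ε hε => ?_)
    ((ae_tendsto_conjPoisson_pi_mul_FHT hu.ofReal).mono fun t ht => (hcont.tendsto _).comp ht)
  exact (lintegral_mono fun t => ENNReal.ofReal_le_ofReal
    (log_one_add_norm_conjPoisson_sq_le hu h0 hε t)).trans
      (lintegral_log_norm_one_sub_I_mul_cauchyTransform_le hu h0 hε)

lemma ae_tendsto_zero_of_tsum_lintegral_ne_top {α : Type*} [MeasurableSpace α] {μ : Measure α}
    {F : ℕ → α → ℝ≥0∞} (hF : ∀ k, AEMeasurable (F k) μ) (h : ∑' k, ∫⁻ x, F k x ∂μ ≠ ⊤) :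
    ∀ᵐ x ∂μ, Tendsto (fun k => F k x) atTop (𝓝 0) := by
  rw [← lintegral_tsum hF] at h
  filter_upwards [ae_lt_top' (AEMeasurable.tsum hF) h] with x hx
  exact ENNReal.tendsto_atTop_zero_of_tsum_ne_top hx.ne

lemma tendsto_zero_of_tendsto_ofReal_log {ι : Type*} {l : Filter ι} {z : ι → ℂ}
    (h : Tendsto (fun i => ENNReal.ofReal (Real.log (1 + ‖z i‖ ^ 2) / 2)) l (𝓝 0)) :
    Tendsto z l (𝓝 0) := by
  have hlog_nonneg : ∀ i, 0 ≤ Real.log (1 + ‖z i‖ ^ 2) / 2 := fun i =>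
    div_nonneg (Real.log_nonneg (by simp)) zero_le_two
  have hlog : Tendsto (fun i => Real.log (1 + ‖z i‖ ^ 2) / 2) l (𝓝 0) := by
    simpa only [Function.comp_def, ENNReal.toReal_ofReal (hlog_nonneg _), ENNReal.toReal_zero]
      using (ENNReal.tendsto_toReal ENNReal.zero_ne_top).comp h
  have hsq : Tendsto (fun i => Real.exp (2 * (Real.log (1 + ‖z i‖ ^ 2) / 2)) - 1) l (𝓝 0) := by
    simpa using ((Real.continuous_exp.tendsto _).comp (hlog.const_mul 2)).sub_const 1
  have hexp : ∀ i, Real.exp (2 * (Real.log (1 + ‖z i‖ ^ 2) / 2)) - 1 = ‖z i‖ ^ 2 := fun i => by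
    rw [mul_div_cancel₀ _ two_ne_zero, Real.exp_log (by positivity), add_sub_cancel_left]
  simp_rw [hexp] at hsq
  rw [tendsto_zero_iff_norm_tendsto_zero]
  simpa using hsq.sqrt

lemma ae_tendsto_FHT_zero_of_nonneg {u : ℕ → ℝ → ℝ} (hu : ∀ k, Integrable (u k) μI)
    (h0 : ∀ k x, 0 ≤ u k x) (hs : Summable fun k => ∫ x, u k x ∂μI) :
    ∀ᵐ t ∂μI, Tendsto (fun k => FHT (fun x => u k x) t) atTop (𝓝 0) := by
  have hmeas : ∀ k, AEMeasurable (fun t => ENNReal.ofReal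
      (Real.log (1 + ‖Real.pi * FHT (fun x => u k x) t‖ ^ 2) / 2)) μI := fun k => by
    have := (aestronglyMeasurable_FHT (hu k).ofReal).aemeasurable
    fun_prop
  have hsum : ∑' k, ∫⁻ t, ENNReal.ofReal
      (Real.log (1 + ‖Real.pi * FHT (fun x => u k x) t‖ ^ 2) / 2) ∂μI ≠ ⊤ :=
    ne_top_of_le_ne_top (hs.mul_left (2 * Real.pi)).tsum_ofReal_ne_top
      (ENNReal.tsum_le_tsum fun k => lintegral_log_one_add_norm_FHT_sq_le (hu k) (h0 k))
  filter_upwards [ae_tendsto_zero_of_tsum_lintegral_ne_top hmeas hsum] with t ht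
  simpa only [inv_mul_cancel_left₀ (Complex.ofReal_ne_zero.2 Real.pi_ne_zero), mul_zero]
    using (tendsto_zero_of_tendsto_ofReal_log ht).const_mul (Real.pi : ℂ)⁻¹

lemma ae_tendsto_FHT_zero {u : ℕ → ℝ → ℂ} (hu : ∀ k, Integrable (u k) μI)
    (hs : Summable fun k => ∫ x, ‖u k x‖ ∂μI) :
    ∀ᵐ t ∂μI, Tendsto (fun k => FHT (u k) t) atTop (𝓝 0) := by
  have hparts := ae_all_iff.2 fun j => ae_tendsto_FHT_zero_of_nonneg
    (fun k => integrable_directionalPart (hu k) j) (fun k x => directionalPart_nonneg j (u k x))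
    (hs.of_nonneg_of_le (fun k => integral_nonneg fun x => directionalPart_nonneg j _)
      fun k => integral_mono (integrable_directionalPart (hu k) j) (hu k).norm
        fun x => directionalPart_le_norm j _)
  filter_upwards [hparts, ae_all_iff.2 fun k => FHT_ae_eq_sum_directionalPart (hu k)] with t ht hsum
  simp_rw [hsum]
  simpa using tendsto_finsetSum (Finset.range 4) fun j _ => (ht j).const_mul (Complex.I ^ j)

end FiniteHilbertTransform

/-! ### Truncation -/

/-- The truncation of `z` at height `N`, by which `L¹` functions are approximated by bounded
ones. -/
def normTruncation (N : ℕ) (z : ℂ) : ℂ := if ‖z‖ ≤ N then z else 0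

section Truncation

lemma measurable_normTruncation (N : ℕ) : Measurable (normTruncation N) :=
  Measurable.ite (measurableSet_le measurable_norm measurable_const) measurable_id measurable_const

lemma norm_normTruncation_le (N : ℕ) (z : ℂ) : ‖normTruncation N z‖ ≤ N := by
  unfold normTruncation
  split_ifs with h
  · exact h
  · simp

lemma norm_normTruncation_le_norm (N : ℕ) (z : ℂ) : ‖normTruncation N z‖ ≤ ‖z‖ := by
  unfold normTruncation
  split_ifs <;> simp

lemma norm_sub_normTruncation_le (N : ℕ) (z : ℂ) : ‖z - normTruncation N z‖ ≤ ‖z‖ := by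
  unfold normTruncation
  split_ifs <;> simp

lemma tendsto_normTruncation (z : ℂ) : Tendsto (normTruncation · z) atTop (𝓝 z) :=
  tendsto_const_nhds.congr' <| (eventually_ge_atTop ⌈‖z‖⌉₊).mono fun _ hN =>
    (if_pos ((Nat.le_ceil _).trans (Nat.cast_le.2 hN))).symm

variable {f : ℝ → ℂ}

lemma integrable_normTruncation {μ : Measure ℝ} (hf : Integrable f μ) (N : ℕ) :
    Integrable (fun x => normTruncation N (f x)) μ :=
  hf.mono ((measurable_normTruncation N).comp_aemeasurable hf.aemeasurable).aestronglyMeasurable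
    (Eventually.of_forall fun _ => norm_normTruncation_le_norm N _)

lemma tendsto_integral_norm_sub_normTruncation {μ : Measure ℝ} (hf : Integrable f μ) :
    Tendsto (fun N => ∫ x, ‖f x - normTruncation N (f x)‖ ∂μ) atTop (𝓝 0) := by
  rw [← integral_zero ℝ ℝ (μ := μ)]
  refine tendsto_integral_of_dominated_convergence (fun x => ‖f x‖)
    (fun N => (hf.sub (integrable_normTruncation hf N)).norm.1) hf.norm
    (fun N => Eventually.of_forall fun x => ?_) (Eventually.of_forall fun x => ?_)
  · rw [norm_norm]
    exact norm_sub_normTruncation_le N _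
  · simpa using ((tendsto_normTruncation (f x)).const_sub (f x)).norm

lemma exists_tendsto_FHT_normTruncation (hf : Integrable f μI) :
    ∃ n : ℕ → ℕ, Tendsto n atTop atTop ∧ ∀ᵐ t ∂μI, Tendsto
      (fun k => FHT (fun x => normTruncation (n k) (f x)) t) atTop (𝓝 (FHT f t)) := by
  have hsmall : ∀ k : ℕ, ∃ n ≥ k, ∫ x, ‖f x - normTruncation n (f x)‖ ∂μI ≤ (1 / 2) ^ k :=
    fun k => ((eventually_ge_atTop k).and ((tendsto_integral_norm_sub_normTruncation hf).eventually
      (ge_mem_nhds (by positivity)))).exists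
  choose n hn hle using hsmall
  have hint : ∀ k, Integrable (fun x => normTruncation (n k) (f x)) μI := fun k =>
    integrable_normTruncation hf (n k)
  have hdiff := ae_tendsto_FHT_zero (fun k => hf.sub (hint k))
    (summable_geometric_two.of_nonneg_of_le (fun k => integral_nonneg fun _ => norm_nonneg _) hle)
  refine ⟨n, tendsto_atTop_mono hn tendsto_id, ?_⟩
  filter_upwards [hdiff, ae_all_iff.2 fun k => FHT_sub_ae_eq hf (hint k)] with t ht hsub
  have hlim := ht.const_sub (FHT f t)
  rw [sub_zero] at hlim
  exact hlim.congr fun k => by rw [Pi.sub_def, hsub k, sub_sub_cancel]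

end Truncation

/-! ### Bounded functions -/

section Bounded

variable {h : ℝ → ℂ} {M : ℝ}

lemma integrable_of_norm_le (hm : AEStronglyMeasurable h μI) (hb : ∀ x, ‖h x‖ ≤ M) :
    Integrable h μI :=
  (integrable_const M).mono' hm (Eventually.of_forall hb)

lemma exp_norm_div_le_sum (hM : 0 < M) (z : ℂ) :
    Real.exp (‖z‖ / (8 * M))
      ≤ ∑ k ∈ Finset.range 4, Real.exp (((-Complex.I) ^ k * z).re / (4 * M)) := by
  obtain ⟨k, hk, hle⟩ : ∃ k ∈ Finset.range 4, ‖z‖ / 2 ≤ ((-Complex.I) ^ k * z).re := by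
    by_contra! hlt
    have hre : |z.re| < ‖z‖ / 2 := abs_lt.2
      ⟨by simpa [neg_lt] using hlt 2 (by simp), by simpa using hlt 0 (by simp)⟩
    have him : |z.im| < ‖z‖ / 2 := abs_lt.2
      ⟨by simpa [neg_lt, pow_succ] using hlt 3 (by simp), by simpa using hlt 1 (by simp)⟩
    linarith [Complex.norm_le_abs_re_add_abs_im z]
  refine (Real.exp_le_exp.2 ?_).trans (Finset.single_le_sum (fun _ _ => Real.exp_nonneg _) hk)
  rw [div_le_div_iff₀ (by positivity) (by positivity)]
  nlinarith

lemma re_conjPoisson {μ : Measure ℝ} (hh : Integrable h μ) {ε : ℝ} (hε : 0 < ε) (t : ℝ) :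
    (conjPoisson μ ε h t).re
      = (cauchyTransform μ (fun x => (h x).re) (t + ε * Complex.I)).re := by
  have hre := conjPoisson_ofReal hh.re hε t
  have hint := (integral_re (integrable_mul_halfPlaneConjPoisson hh hε t)).symm
  simp only [conjPoisson, ← Complex.ofReal_mul, integral_complex_ofReal, Complex.ofReal_inj,
    RCLike.re_eq_complex_re, Complex.re_mul_ofReal] at hre hint ⊢
  exact hint.trans hre

lemma lintegral_exp_norm_conjPoisson_le (hM : 0 < M) (hm : AEStronglyMeasurable h μI)
    (hb : ∀ x, ‖h x‖ ≤ M) {ε : ℝ} (hε : 0 < ε) :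
    ∫⁻ t, ENNReal.ofReal (Real.exp (‖conjPoisson μI ε h t‖ / (8 * M))) ∂μI
      ≤ ENNReal.ofReal (16 * Real.pi * Real.exp 1) := by
  have hh := integrable_of_norm_le hm hb
  have hpart : ∀ k : ℕ, ∫⁻ t, ENNReal.ofReal
      (Real.exp (((-Complex.I) ^ k * conjPoisson μI ε h t).re / (4 * M))) ∂μI
        ≤ ENNReal.ofReal (4 * Real.pi * Real.exp 1) := fun k => by
    have hk := hh.const_mul ((-Complex.I) ^ k)
    simp_rw [← conjPoisson_const_mul, re_conjPoisson hk hε]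
    refine lintegral_exp_cauchyTransform_re_le hM hk.re (fun x => ?_) hε
    refine (Complex.abs_re_le_norm _).trans (le_of_eq_of_le ?_ (hb x))
    rw [norm_mul, norm_pow, norm_neg, Complex.norm_I, one_pow, one_mul]
  have hcont := continuous_conjPoisson hh hε
  calc _ ≤ ∫⁻ t, ∑ k ∈ Finset.range 4, ENNReal.ofReal
        (Real.exp (((-Complex.I) ^ k * conjPoisson μI ε h t).re / (4 * M))) ∂μI := by
        refine lintegral_mono fun t => ?_
        rw [← ENNReal.ofReal_sum_of_nonneg fun _ _ => Real.exp_nonneg _]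
        exact ENNReal.ofReal_le_ofReal (exp_norm_div_le_sum hM _)
    _ ≤ ∑ _k ∈ Finset.range 4, ENNReal.ofReal (4 * Real.pi * Real.exp 1) := by
        rw [lintegral_finsetSum _ fun k _ => by fun_prop]
        exact Finset.sum_le_sum fun k _ => hpart k
    _ = ENNReal.ofReal (16 * Real.pi * Real.exp 1) := by
        rw [← ENNReal.ofReal_sum_of_nonneg fun _ _ => by positivity]
        congr 1
        simp
        ring

lemma lintegral_exp_norm_FHT_le (hM : 0 < M) (hm : AEStronglyMeasurable h μI)
    (hb : ∀ x, ‖h x‖ ≤ M) :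
    ∫⁻ t, ENNReal.ofReal (Real.exp (‖Real.pi * FHT h t‖ / (8 * M))) ∂μI
      ≤ ENNReal.ofReal (16 * Real.pi * Real.exp 1) := by
  have hh := integrable_of_norm_le hm hb
  have hcont : Continuous fun z : ℂ => ENNReal.ofReal (Real.exp (‖z‖ / (8 * M))) :=
    ENNReal.continuous_ofReal.comp (by fun_prop)
  exact lintegral_le_of_ae_tendsto_nhdsGT
    (fun ε hε => (hcont.comp (continuous_conjPoisson hh hε)).aemeasurable)
    (fun ε => lintegral_exp_norm_conjPoisson_le hM hm hb)
    ((ae_tendsto_conjPoisson_pi_mul_FHT hh).mono fun t ht => (hcont.tendsto _).comp ht)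

lemma integrable_exp_norm_FHT (hM : 0 < M) (hm : AEStronglyMeasurable h μI)
    (hb : ∀ x, ‖h x‖ ≤ M) :
    Integrable (fun t => Real.exp (‖Real.pi * FHT h t‖ / (8 * M))) μI := by
  have hFHT := aestronglyMeasurable_FHT (integrable_of_norm_le hm hb)
  have hcont : Continuous fun z : ℂ => Real.exp (‖Real.pi * z‖ / (8 * M)) := by fun_prop
  exact integrable_of_lintegral_ofReal_le (hcont.comp_aestronglyMeasurable hFHT)
    (fun _ => Real.exp_nonneg _) (lintegral_exp_norm_FHT_le hM hm hb)

end Bounded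

/-! ### Parseval pairs -/

/-- The pairs for which both sides of the Parseval formula make sense and agree; the relation is
symmetric, so that truncation can be applied to either function. -/
structure ParsevalPair (f g : ℝ → ℂ) : Prop where
  integrable_left : Integrable (fun x => f x * FHT g x) μI
  integrable_right : Integrable (fun x => g x * FHT f x) μI
  integral_eq : ∫ x, f x * FHT g x ∂μI = -∫ x, g x * FHT f x ∂μI

section Parseval

variable {f g h : ℝ → ℂ} {M : ℝ}

lemma ParsevalPair.symm (hfg : ParsevalPair f g) : ParsevalPair g f :=
  ⟨hfg.integrable_right, hfg.integrable_left, by rw [hfg.integral_eq, neg_neg]⟩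

lemma integral_mul_conjPoisson_eq_neg {μ : Measure ℝ} [SFinite μ] (hf : Integrable f μ)
    (hg : Integrable g μ) {ε : ℝ} (hε : 0 < ε) :
    ∫ t, f t * conjPoisson μ ε g t ∂μ = -∫ t, g t * conjPoisson μ ε f t ∂μ := by
  have hcont := continuous_halfPlaneConjPoisson hε
  have hint : Integrable (Function.uncurry fun t x : ℝ =>
      f t * (g x * (halfPlaneConjPoisson ε (x - t) : ℂ))) (μ.prod μ) := by
    simp only [Function.uncurry_def, ← mul_assoc]
    refine (hf.mul_prod hg).mul_bdd (c := ε⁻¹)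
      (by fun_prop : Continuous _).aestronglyMeasurable (Eventually.of_forall fun p => ?_)
    rw [Complex.norm_real]
    exact abs_halfPlaneConjPoisson_le hε _
  simp only [conjPoisson, ← integral_const_mul]
  rw [integral_integral_swap hint]
  simp only [← integral_neg]
  refine integral_congr_ae (.of_forall fun x => integral_congr_ae (.of_forall fun t => ?_))
  beta_reduce
  rw [← neg_sub x t, halfPlaneConjPoisson_neg, Complex.ofReal_neg]
  ring

lemma unifIntegrable_mul_conjPoisson (hM : 0 < M) (hfm : AEStronglyMeasurable f μI)
    (hfb : ∀ x, ‖f x‖ ≤ M) (hgm : AEStronglyMeasurable g μI) (hgb : ∀ x, ‖g x‖ ≤ M) {e : ℕ → ℝ}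
    (he : ∀ n, 0 < e n) :
    UnifIntegrable (fun n t => f t * conjPoisson μI (e n) g t) 1 μI := by
  have hf := integrable_of_norm_le hfm hfb
  have hg := integrable_of_norm_le hgm hgb
  refine unifIntegrable_of_lintegral_exp_le (c := (8 * M * M)⁻¹)
    (K := 16 * Real.pi * Real.exp 1) (by positivity)
    (fun n => integrable_mul_conjPoisson hf hg (he n)) fun n => ?_
  refine (lintegral_mono fun t => ENNReal.ofReal_le_ofReal (Real.exp_le_exp.2 ?_)).trans
    (lintegral_exp_norm_conjPoisson_le hM hgm hgb (he n))
  rw [norm_mul, inv_mul_eq_div, div_le_div_iff₀ (by positivity) (by positivity)]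
  nlinarith [mul_le_mul_of_nonneg_right (hfb t)
    (mul_nonneg (norm_nonneg (conjPoisson μI (e n) g t)) hM.le)]

lemma tendsto_integral_mul_conjPoisson (hM : 0 < M) (hfm : AEStronglyMeasurable f μI)
    (hfb : ∀ x, ‖f x‖ ≤ M) (hgm : AEStronglyMeasurable g μI) (hgb : ∀ x, ‖g x‖ ≤ M) {e : ℕ → ℝ}
    (he : ∀ n, 0 < e n) (hlim : Tendsto e atTop (𝓝[>] 0)) :
    Tendsto (fun n => ∫ t, f t * conjPoisson μI (e n) g t ∂μI) atTop
      (𝓝 (Real.pi * ∫ t, f t * FHT g t ∂μI)) := by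
  have hg := integrable_of_norm_le hgm hgb
  simp_rw [← integral_const_mul, mul_left_comm (Real.pi : ℂ)]
  exact tendsto_integral_of_unifIntegrable
    (fun n => integrable_mul_conjPoisson (integrable_of_norm_le hfm hfb) hg (he n))
    (unifIntegrable_mul_conjPoisson hM hfm hfb hgm hgb he)
    ((ae_tendsto_conjPoisson_pi_mul_FHT hg).mono fun t ht => (ht.comp hlim).const_mul (f t))

lemma integral_mul_FHT_eq_neg_of_norm_le (hM : 0 < M) (hfm : AEStronglyMeasurable f μI)
    (hfb : ∀ x, ‖f x‖ ≤ M) (hgm : AEStronglyMeasurable g μI) (hgb : ∀ x, ‖g x‖ ≤ M) :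
    ∫ x, f x * FHT g x ∂μI = -∫ x, g x * FHT f x ∂μI := by
  obtain ⟨e, -, he, hlim⟩ := exists_seq_strictAnti_tendsto_nhdsWithin (0 : ℝ)
  apply pi_mul_cancel
  rw [mul_neg]
  refine tendsto_nhds_unique (tendsto_integral_mul_conjPoisson hM hfm hfb hgm hgb he hlim)
    ((tendsto_integral_mul_conjPoisson hM hgm hgb hfm hfb he hlim).neg.congr fun n => ?_)
  exact (integral_mul_conjPoisson_eq_neg (integrable_of_norm_le hfm hfb)
    (integrable_of_norm_le hgm hgb) (he n)).symm

lemma mul_le_mul_posLog_add_exp {a : ℝ} (ha : 0 ≤ a) (b : ℝ) :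
    a * b ≤ a * max (Real.log a) 0 + Real.exp b := by
  rcases ha.eq_or_lt with rfl | ha
  · simpa using Real.exp_nonneg b
  calc a * b ≤ a * (Real.log a⁻¹⁻¹ + a⁻¹ * Real.exp b) := by
        gcongr
        exact le_log_add_mul_exp (inv_pos.2 ha) b
    _ = a * Real.log a + Real.exp b := by rw [inv_inv, mul_add, mul_inv_cancel_left₀ ha.ne']
    _ ≤ a * max (Real.log a) 0 + Real.exp b := by
        gcongr
        exact le_max_left _ _

lemma MemLlogL.integrable (hg : MemLlogL g) : Integrable g μI := by
  refine ((integrable_const (Real.exp 1)).add hg.2).mono' hg.1 (Eventually.of_forall fun x => ?_)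
  have hYoung := mul_le_mul_posLog_add_exp (norm_nonneg (g x)) 1
  rw [mul_one, add_comm] at hYoung
  exact hYoung

lemma MemLlogL.indicator (hg : MemLlogL g) {A : Set ℝ} (hA : MeasurableSet A) :
    MemLlogL (A.indicator g) := by
  refine ⟨hg.1.indicator hA, (Integrable.indicator hg.2 hA).congr (.of_forall fun x => ?_)⟩
  by_cases hx : x ∈ A <;> simp [hx]

lemma MemLlogL.integrable_mul_FHT (hg : MemLlogL g) (hM : 0 < M)
    (hm : AEStronglyMeasurable h μI) (hb : ∀ x, ‖h x‖ ≤ M) :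
    Integrable (fun x => g x * FHT h x) μI := by
  have hbound := ((show Integrable _ μI from hg.2).add (integrable_exp_norm_FHT hM hm hb)).const_mul
    (8 * M / Real.pi)
  refine hbound.mono' (hg.1.mul (aestronglyMeasurable_FHT (integrable_of_norm_le hm hb)))
    (Eventually.of_forall fun x => ?_)
  calc ‖g x * FHT h x‖
      = 8 * M / Real.pi * (‖g x‖ * (‖Real.pi * FHT h x‖ / (8 * M))) := by
        rw [norm_mul, norm_mul, Complex.norm_real, Real.norm_of_nonneg Real.pi_pos.le]
        field_simp
    _ ≤ _ := by
        gcongr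
        exact mul_le_mul_posLog_add_exp (norm_nonneg _) _

lemma MemLlogL.of_norm_le (hm : AEStronglyMeasurable h μI) (hb : ∀ x, ‖h x‖ ≤ M) : MemLlogL h := by
  have hmeas : AEStronglyMeasurable (fun x => ‖h x‖ * max (Real.log ‖h x‖) 0) μI :=
    (hm.norm.aemeasurable.mul
      ((Real.measurable_log.comp_aemeasurable hm.norm.aemeasurable).max
        aemeasurable_const)).aestronglyMeasurable
  refine ⟨hm, (integrable_const (M * max (Real.log M) 0)).mono' hmeas (.of_forall fun x => ?_)⟩
  have hM : 0 ≤ M := (norm_nonneg _).trans (hb x)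
  rw [Real.norm_of_nonneg (mul_nonneg (norm_nonneg _) (le_max_right _ _)), max_comm, max_comm _ 0]
  exact mul_le_mul (hb x) (Real.posLog_le_posLog (norm_nonneg _) (hb x)) Real.posLog_nonneg hM

lemma ParsevalPair.of_norm_le (hM : 0 < M) (hfm : AEStronglyMeasurable f μI)
    (hfb : ∀ x, ‖f x‖ ≤ M) (hgm : AEStronglyMeasurable g μI) (hgb : ∀ x, ‖g x‖ ≤ M) :
    ParsevalPair f g :=
  ⟨(MemLlogL.of_norm_le hfm hfb).integrable_mul_FHT hM hgm hgb,
    (MemLlogL.of_norm_le hgm hgb).integrable_mul_FHT hM hfm hfb,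
    integral_mul_FHT_eq_neg_of_norm_le hM hfm hfb hgm hgb⟩

/-- Testing against indicators makes the integrals of `g · T (truncated f)` converge over every
set, which is where the Vitali–Hahn–Saks theorem applies. -/
lemma ParsevalPair.of_normTruncation (hf : Integrable f μI)
    (hfg : ∀ A, MeasurableSet A → Integrable (fun x => f x * FHT (A.indicator g) x) μI)
    (hpair : ∀ N A, MeasurableSet A →
      ParsevalPair (fun x => normTruncation N (f x)) (A.indicator g)) : ParsevalPair f g := by
  obtain ⟨n, hn, hlim⟩ := exists_tendsto_FHT_normTruncation hf
  let w : ℕ → ℝ → ℂ := fun k x => g x * FHT (fun x => normTruncation (n k) (f x)) x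
  have hset : ∀ A, MeasurableSet A → Tendsto (fun k => ∫ x in A, w k x ∂μI) atTop
      (𝓝 (-∫ x, f x * FHT (A.indicator g) x ∂μI)) := fun A hA => by
    refine (tendsto_integral_of_dominated_convergence (fun x => ‖f x * FHT (A.indicator g) x‖)
      (fun k => (hpair (n k) A hA).integrable_left.1) (hfg A hA).norm
      (fun k => Eventually.of_forall fun x => ?_) (Eventually.of_forall fun x =>
        ((tendsto_normTruncation (f x)).comp hn).mul_const _)).neg.congr fun k => ?_
    · rw [norm_mul, norm_mul]
      gcongr
      exact norm_normTruncation_le_norm _ _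
    · rw [(hpair (n k) A hA).integral_eq, neg_neg, ← integral_indicator hA]
      simp only [w, indicator_mul_left]
  have hw : ∀ k, Integrable (w k) μI := fun k => by
    simpa only [indicator_univ] using (hpair (n k) univ .univ).integrable_right
  have hwlim : ∀ᵐ x ∂μI, Tendsto (fun k => w k x) atTop (𝓝 (g x * FHT f x)) :=
    hlim.mono fun x hx => hx.const_mul (g x)
  have hUI := unifIntegrable_of_tendsto_setIntegral hw fun A hA => ⟨_, hset A hA⟩
  have huniv := hset univ .univ
  simp only [indicator_univ, Measure.restrict_univ] at huniv
  refine ⟨by simpa only [indicator_univ] using hfg univ .univ,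
    integrable_of_unifIntegrable_of_tendsto hw hUI hwlim, ?_⟩
  rw [← tendsto_nhds_unique huniv (tendsto_integral_of_unifIntegrable hw hUI hwlim), neg_neg]

lemma MemLlogL.parsevalPair_of_norm_le (hg : MemLlogL g) (hm : AEStronglyMeasurable h μI)
    (hb : ∀ x, ‖h x‖ ≤ M) (hM : 0 < M) : ParsevalPair g h := by
  have hind : ∀ (A : Set ℝ) x, ‖A.indicator h x‖ ≤ M := fun A x =>
    (norm_indicator_le_norm_self h x).trans (hb x)
  refine .of_normTruncation hg.integrable
    (fun A hA => hg.integrable_mul_FHT hM (hm.indicator hA) (hind A)) fun N A hA => ?_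
  exact ParsevalPair.of_norm_le (M := max N M) (lt_max_of_lt_right hM)
    (integrable_normTruncation hg.integrable N).1
    (fun x => (norm_normTruncation_le N _).trans (le_max_left _ _)) (hm.indicator hA)
    fun x => (hind A x).trans (le_max_right _ _)

end Parseval

/-- Parseval formula: if `f ∈ L¹(-1,1)`, `g ∈ L log L(-1,1)` and `f·T(gχ_A) ∈ L¹` for every
Borel set `A`, then `g·T(f) ∈ L¹` and `∫ f T(g) = -∫ g T(f)`. -/
theorem parseval_LlogL (f g : ℝ → ℂ)
    (hf : IntegrableOn f (Set.Ioo (-1 : ℝ) 1))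
    (hg : MemLlogL g)
    (hfg : ∀ A : Set ℝ, MeasurableSet A →
      IntegrableOn (fun x => f x * FHT (A.indicator g) x) (Set.Ioo (-1 : ℝ) 1)) :
    IntegrableOn (fun x => g x * FHT f x) (Set.Ioo (-1 : ℝ) 1) ∧
    ∫ x in Set.Ioo (-1 : ℝ) 1, f x * FHT g x
      = - ∫ x in Set.Ioo (-1 : ℝ) 1, g x * FHT f x := by
  have hpair : ParsevalPair f g := .of_normTruncation hf hfg fun N A hA =>
    ((hg.indicator hA).parsevalPair_of_norm_le (integrable_normTruncation hf N).1
      (fun x => (norm_normTruncation_le N (f x)).trans (lt_add_one _).le)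
      (Nat.cast_add_one_pos N)).symm
  exact ⟨hpair.integrable_right, hpair.integral_eq⟩
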